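/- (No-local-broadcasting of mutual information) Let ρ_{AB} be a bipartite density matrix. There exist quantum channels Λ: A → A₁A₂ and Γ: B → B₁B₂ such that ρ̃ = (Λ ⊗ Γ)[ρ_{AB}] satisfies I(A₁:B₁)_{ρ̃} = I(A₂:B₂)_{ρ̃} = I(A:B)_ρ if and only if ρ_{AB} is classical-classical, i.e., ρ_{AB} = Σ_{ij} p_{ij} |a_i⟩⟨a_i| ⊗ |b_j⟩⟨b_j| for orthonormal bases {|a_i⟩} of H_A and {|b_j⟩} of H_B. -/

import Mathlib

open Matrix Kronecker ComplexOrder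

section Defs
variable {α α' β β' γ : Type*} [Fintype α] [DecidableEq α] [Fintype α'] [DecidableEq α']
  [Fintype β] [DecidableEq β] [Fintype β'] [DecidableEq β'] [Fintype γ] [DecidableEq γ]

/-- A density matrix: a positive semidefinite matrix with unit trace. -/
def IsDensityMatrix (ρ : Matrix β β ℂ) : Prop := ρ.PosSemidef ∧ ρ.trace = 1

/-- The map `id_α ⊗ Λ` induced on matrices over the product index type. -/
noncomputable def idTensor (Λ : Matrix β β ℂ →ₗ[ℂ] Matrix β' β' ℂ) :
    Matrix (α × β) (α × β) ℂ →ₗ[ℂ] Matrix (α × β') (α × β') ℂ where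
  toFun M := Matrix.of fun p q => Λ (Matrix.of fun b b' => M (p.1, b) (q.1, b')) p.2 q.2
  map_add' M N := by
    ext p q
    show Λ (Matrix.of fun b b' => (M + N) (p.1, b) (q.1, b')) p.2 q.2 = _
    have h : (Matrix.of fun b b' => (M + N) (p.1, b) (q.1, b')) =
        (Matrix.of fun b b' => M (p.1, b) (q.1, b')) +
          (Matrix.of fun b b' => N (p.1, b) (q.1, b')) := rfl
    rw [h, map_add]
    rfl
  map_smul' c M := by
    ext p q
    show Λ (Matrix.of fun b b' => (c • M) (p.1, b) (q.1, b')) p.2 q.2 = _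
    have h : (Matrix.of fun b b' => (c • M) (p.1, b) (q.1, b')) =
        c • (Matrix.of fun b b' => M (p.1, b) (q.1, b')) := rfl
    rw [h, _root_.map_smul]
    rfl

/-- The map `Λ ⊗ id_β` induced on matrices over the product index type. -/
noncomputable def tensorId (Λ : Matrix α α ℂ →ₗ[ℂ] Matrix α' α' ℂ) :
    Matrix (α × β) (α × β) ℂ →ₗ[ℂ] Matrix (α' × β) (α' × β) ℂ where
  toFun M := Matrix.of fun p q => Λ (Matrix.of fun a a' => M (a, p.2) (a', q.2)) p.1 q.1
  map_add' M N := by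
    ext p q
    show Λ (Matrix.of fun a a' => (M + N) (a, p.2) (a', q.2)) p.1 q.1 = _
    have h : (Matrix.of fun a a' => (M + N) (a, p.2) (a', q.2)) =
        (Matrix.of fun a a' => M (a, p.2) (a', q.2)) +
          (Matrix.of fun a a' => N (a, p.2) (a', q.2)) := rfl
    rw [h, map_add]
    rfl
  map_smul' c M := by
    ext p q
    show Λ (Matrix.of fun a a' => (c • M) (a, p.2) (a', q.2)) p.1 q.1 = _
    have h : (Matrix.of fun a a' => (c • M) (a, p.2) (a', q.2)) =
        c • (Matrix.of fun a a' => M (a, p.2) (a', q.2)) := rfl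
    rw [h, _root_.map_smul]
    rfl

/-- Complete positivity: all extensions `id ⊗ Λ` preserve positive semidefiniteness. -/
def IsCompletelyPositive (Λ : Matrix β β ℂ →ₗ[ℂ] Matrix β' β' ℂ) : Prop :=
  ∀ (k : ℕ) (M : Matrix (Fin k × β) (Fin k × β) ℂ), M.PosSemidef → (idTensor Λ M).PosSemidef

/-- A quantum channel: a completely positive trace-preserving linear map. -/
def IsQuantumChannel (Λ : Matrix β β ℂ →ₗ[ℂ] Matrix β' β' ℂ) : Prop :=
  IsCompletelyPositive Λ ∧ ∀ X, (Λ X).trace = X.trace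

/-- Partial trace over the second tensor factor. -/
noncomputable def ptraceRight (M : Matrix (α × β) (α × β) ℂ) : Matrix α α ℂ :=
  Matrix.of fun a a' => ∑ b, M (a, b) (a', b)

/-- Partial trace over the first tensor factor. -/
noncomputable def ptraceLeft (M : Matrix (α × β) (α × β) ℂ) : Matrix β β ℂ :=
  Matrix.of fun b b' => ∑ a, M (a, b) (a, b')

/-- The von Neumann entropy `S(ρ) = -Tr(ρ log₂ ρ)`, computed via the eigenvalues
(with the convention `0 log 0 = 0`; junk value `0` for non-Hermitian input). -/
noncomputable def vnEntropy (ρ : Matrix β β ℂ) : ℝ :=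
  if h : ρ.IsHermitian then -∑ i, h.eigenvalues i * Real.logb 2 (h.eigenvalues i) else 0

/-- The mutual information `I(A:B) = S(A) + S(B) - S(AB)` of a bipartite state. -/
noncomputable def mutualInfo (ρ : Matrix (α × β) (α × β) ℂ) : ℝ :=
  vnEntropy (ptraceRight ρ) + vnEntropy (ptraceLeft ρ) - vnEntropy ρ

/-- The reduced state on `A₁B₁` of a state of `(A₁A₂)(B₁B₂)`. -/
noncomputable def marg11 (M : Matrix ((α × α') × β × β') ((α × α') × β × β') ℂ) :
    Matrix (α × β) (α × β) ℂ :=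
  Matrix.of fun p q => ∑ a₂, ∑ b₂, M ((p.1, a₂), (p.2, b₂)) ((q.1, a₂), (q.2, b₂))

/-- The reduced state on `A₂B₂` of a state of `(A₁A₂)(B₁B₂)`. -/
noncomputable def marg22 (M : Matrix ((α × α') × β × β') ((α × α') × β × β') ℂ) :
    Matrix (α' × β') (α' × β') ℂ :=
  Matrix.of fun p q => ∑ a₁, ∑ b₁, M ((a₁, p.1), (b₁, p.2)) ((a₁, q.1), (b₁, q.2))

/-- A bipartite state is classical-classical if it is diagonal in a product of local
orthonormal bases: `ρ = ∑ᵢⱼ pᵢⱼ |aᵢ⟩⟨aᵢ| ⊗ |bⱼ⟩⟨bⱼ|`. -/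
def ClassicalClassical (ρ : Matrix (α × β) (α × β) ℂ) : Prop :=
  ∃ (p : α → β → ℝ) (av : α → α → ℂ) (bv : β → β → ℂ),
    (∀ i j, 0 ≤ p i j) ∧ (∑ i, ∑ j, p i j = 1) ∧
    (∀ i i', star (av i) ⬝ᵥ av i' = if i = i' then 1 else 0) ∧
    (∀ j j', star (bv j) ⬝ᵥ bv j' = if j = j' then 1 else 0) ∧
    ρ = ∑ i, ∑ j, (p i j : ℂ) •
      (vecMulVec (av i) (star (av i)) ⊗ₖ vecMulVec (bv j) (star (bv j)))

end Defs

/-! Both local maps `X ↦ Tr₂ (Λ X)` and `X ↦ Tr₁ (Λ X)` preserve the mutual information, which is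
the relative entropy of `ρ` with respect to `ρ_A ⊗ ρ_B`. The equality case of the data-processing
inequality then says that `(ρ_A ⊗ ρ_B)⁻¹ ρ` and `(ρ_A ⊗ ρ_B)^{-1/2} ρ (ρ_A ⊗ ρ_B)^{-1/2}`
(inverses on the support) are intertwined with their output counterparts by every Kraus operator.
Taking slices `Tr_B[(1 ⊗ M) ρ]` for observables `M` on `B`, the slices normalised by `ρ_A` are
thus intertwined with operators on `A₁` and also with operators on `A₂`; as operators on `A₁`
commute with operators on `A₂`, all slices commute. Hence they are diagonal in a common orthonormal
basis of `A`, and by symmetry the slices over `A` are diagonal in a common basis of `B`, which makes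
`ρ` classical-classical. Conversely, measuring in those bases and preparing two copies of the
outcome broadcasts `ρ`.
-/

namespace NoLocalBroadcasting

section PosSemidef
variable {m n : Type*} [Fintype m] [Fintype n]

open scoped MatrixOrder in
lemma exists_eq_conjTranspose_mul_self {σ : Matrix m m ℂ} (hσ : σ.PosSemidef) :
    ∃ B : Matrix m m ℂ, σ = Bᴴ * B := by
  classical exact CStarAlgebra.nonneg_iff_eq_star_mul_self.mp hσ.nonneg

lemma re_trace_mul_mul_conjTranspose_nonneg {σ : Matrix m m ℂ} (hσ : σ.PosSemidef)
    (Z : Matrix n m ℂ) : 0 ≤ (Z * σ * Zᴴ).trace.re :=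
  (Complex.le_def.mp (hσ.mul_mul_conjTranspose_same Z).trace_nonneg).1

lemma mul_eq_zero_of_re_trace_eq_zero {σ : Matrix m m ℂ} (hσ : σ.PosSemidef) {Z : Matrix n m ℂ}
    (hZ : (Z * σ * Zᴴ).trace.re = 0) : Z * σ = 0 := by
  have htrace : (Z * σ * Zᴴ).trace = 0 :=
    Complex.ext hZ (Complex.le_def.mp (hσ.mul_mul_conjTranspose_same Z).trace_nonneg).2.symm
  obtain ⟨B, rfl⟩ := exists_eq_conjTranspose_mul_self hσ
  have hB : ((Z * Bᴴ) * (Z * Bᴴ)ᴴ).trace = 0 := by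
    simpa only [conjTranspose_mul, conjTranspose_conjTranspose, Matrix.mul_assoc] using htrace
  rw [← Matrix.mul_assoc, trace_mul_conjTranspose_self_eq_zero_iff.mp hB, Matrix.zero_mul]

end PosSemidef

section KrausMap
variable {κ m n : Type*} [Fintype κ] [Fintype m] [Fintype n]

/-- The completely positive map `X ↦ ∑ₖ Kₖ X Kₖᴴ` with Kraus operators `K`. -/
noncomputable def krausMap {m n : Type*} [Fintype m] (K : κ → Matrix n m ℂ) :
    Matrix m m ℂ →ₗ[ℂ] Matrix n n ℂ where
  toFun X := ∑ k, K k * X * (K k)ᴴ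
  map_add' X Y := by simp only [Matrix.mul_add, Matrix.add_mul, Finset.sum_add_distrib]
  map_smul' c X := by
    simp only [Matrix.mul_smul, Matrix.smul_mul, Finset.smul_sum, RingHom.id_apply]

/-- The adjoint `Y ↦ ∑ₖ Kₖᴴ Y Kₖ` of `krausMap K` for the trace pairing (Heisenberg picture). -/
noncomputable def krausDual {m n : Type*} [Fintype n] (K : κ → Matrix n m ℂ) :
    Matrix n n ℂ →ₗ[ℂ] Matrix m m ℂ :=
  krausMap fun k => (K k)ᴴ

lemma krausMap_apply {n : Type*} (K : κ → Matrix n m ℂ) (X : Matrix m m ℂ) :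
    krausMap K X = ∑ k, K k * X * (K k)ᴴ := rfl

lemma krausDual_apply {m : Type*} (K : κ → Matrix n m ℂ) (Y : Matrix n n ℂ) :
    krausDual K Y = ∑ k, (K k)ᴴ * Y * K k := by
  simp only [krausDual, krausMap_apply, conjTranspose_conjTranspose]

lemma krausMap_conjTranspose {n : Type*} (K : κ → Matrix n m ℂ) (X : Matrix m m ℂ) :
    krausMap K Xᴴ = (krausMap K X)ᴴ := by
  simp [krausMap_apply, conjTranspose_sum, Matrix.mul_assoc]

lemma posSemidef_krausMap {n : Type*} [Finite n] (K : κ → Matrix n m ℂ) {X : Matrix m m ℂ}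
    (hX : X.PosSemidef) : (krausMap K X).PosSemidef :=
  posSemidef_sum _ fun k _ => hX.mul_mul_conjTranspose_same (K k)

lemma trace_krausMap_mul (K : κ → Matrix n m ℂ) (X : Matrix m m ℂ) (Y : Matrix n n ℂ) :
    (krausMap K X * Y).trace = (X * krausDual K Y).trace := by
  simp only [krausMap_apply, krausDual_apply, Finset.sum_mul, Finset.mul_sum, trace_sum]
  refine Finset.sum_congr rfl fun k _ => ?_
  rw [Matrix.mul_assoc, Matrix.mul_assoc, Matrix.trace_mul_comm]
  simp only [Matrix.mul_assoc]

lemma trace_krausMap [DecidableEq m] {K : κ → Matrix n m ℂ} (hK : ∑ k, (K k)ᴴ * K k = 1)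
    (X : Matrix m m ℂ) : (krausMap K X).trace = X.trace := by
  classical simpa [krausDual_apply, hK] using trace_krausMap_mul K X 1

/-- The defect `Tr σ(E(YᴴY) - E(Y)ᴴE(Y))` in the Kadison–Schwarz inequality for `E = krausDual K`,
written as a sum of squares. -/
noncomputable def schwarzDefect (K : κ → Matrix n m ℂ) (σ : Matrix m m ℂ) (Y : Matrix n n ℂ) : ℝ :=
  ∑ k, ((Y * K k - K k * krausDual K Y) * σ * (Y * K k - K k * krausDual K Y)ᴴ).trace.re

lemma schwarzDefect_nonneg (K : κ → Matrix n m ℂ) {σ : Matrix m m ℂ} (hσ : σ.PosSemidef)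
    (Y : Matrix n n ℂ) : 0 ≤ schwarzDefect K σ Y :=
  Finset.sum_nonneg fun _ _ => re_trace_mul_mul_conjTranspose_nonneg hσ _

lemma mul_mul_eq_of_schwarzDefect_eq_zero {K : κ → Matrix n m ℂ} {σ : Matrix m m ℂ}
    (hσ : σ.PosSemidef) {Y : Matrix n n ℂ} (h : schwarzDefect K σ Y = 0) (k : κ) :
    Y * K k * σ = K k * krausDual K Y * σ := by
  have hk := (Finset.sum_eq_zero_iff_of_nonneg fun _ _ =>
    re_trace_mul_mul_conjTranspose_nonneg hσ _).mp h k (Finset.mem_univ k)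
  rw [← sub_eq_zero, ← Matrix.sub_mul]
  exact mul_eq_zero_of_re_trace_eq_zero hσ hk

lemma schwarzDefect_eq [DecidableEq m] {K : κ → Matrix n m ℂ} (hK : ∑ k, (K k)ᴴ * K k = 1)
    (σ : Matrix m m ℂ) (Y : Matrix n n ℂ) :
    schwarzDefect K σ Y = (Y * krausMap K σ * Yᴴ).trace.re -
      (krausDual K Y * σ * (krausDual K Y)ᴴ).trace.re := by
  set x := krausDual K Y with hx
  have hxH : ∑ k, (K k)ᴴ * Yᴴ * K k = xᴴ := by
    rw [hx, krausDual, ← krausMap_conjTranspose, ← krausDual, krausDual_apply]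
  have hexpand : ∀ k, ((Y * K k - K k * x) * σ * (Y * K k - K k * x)ᴴ).trace =
      (Y * (K k * σ * (K k)ᴴ) * Yᴴ).trace - (x * σ * ((K k)ᴴ * Yᴴ * K k)).trace
        - ((K k)ᴴ * Y * K k * (σ * xᴴ)).trace + ((K k)ᴴ * K k * (x * σ * xᴴ)).trace := by
    intro k
    have h₁ := Matrix.trace_mul_comm (K k) (x * σ * (K k)ᴴ * Yᴴ)
    have h₂ := Matrix.trace_mul_comm (Y * K k * σ * xᴴ) (K k)ᴴ
    have h₃ := Matrix.trace_mul_comm (K k * x * σ * xᴴ) (K k)ᴴ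
    simp only [conjTranspose_sub, conjTranspose_mul, Matrix.mul_sub, Matrix.sub_mul, trace_sub,
      Matrix.mul_assoc] at h₁ h₂ h₃ ⊢
    rw [h₁, h₂, h₃]
    ring
  simp only [schwarzDefect, ← hx, ← Complex.re_sum, hexpand, Finset.sum_add_distrib,
    Finset.sum_sub_distrib, ← trace_sum, ← Finset.mul_sum, ← Finset.sum_mul, hK, hxH,
    ← krausMap_apply, ← krausDual_apply, Matrix.one_mul, ← Complex.sub_re]
  congr 1
  simp only [Matrix.mul_assoc]
  ring

end KrausMap

section SylvesterForm
variable {κ m n : Type*} [Fintype κ] [Fintype m] [Fintype n]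

/-- The quadratic form `X ↦ Tr(Xᴴ σ X) + t Tr(X ρ Xᴴ)` attached to the Sylvester equation
`σ X + t X ρ = ρ`. -/
noncomputable def sylvesterForm (ρ σ : Matrix m m ℂ) (t : ℝ) (X : Matrix m m ℂ) : ℝ :=
  (Xᴴ * σ * X).trace.re + t * (X * ρ * Xᴴ).trace.re

variable {ρ σ X : Matrix m m ℂ} {t : ℝ}

lemma re_trace_conjTranspose_mul_mul_nonneg (hσ : σ.PosSemidef) (X : Matrix m n ℂ) :
    0 ≤ (Xᴴ * σ * X).trace.re := by
  simpa only [conjTranspose_conjTranspose] using re_trace_mul_mul_conjTranspose_nonneg hσ Xᴴ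

lemma sylvesterForm_nonneg (hρ : ρ.PosSemidef) (hσ : σ.PosSemidef) (ht : 0 ≤ t)
    (X : Matrix m m ℂ) : 0 ≤ sylvesterForm ρ σ t X :=
  add_nonneg (re_trace_conjTranspose_mul_mul_nonneg hσ X)
    (mul_nonneg ht (re_trace_mul_mul_conjTranspose_nonneg hρ X))

lemma mul_eq_zero_of_sylvesterForm_eq_zero (hρ : ρ.PosSemidef) (hσ : σ.PosSemidef) (ht : 0 < t)
    (hX : sylvesterForm ρ σ t X = 0) : σ * X = 0 ∧ X * ρ = 0 := by
  have h₁ := re_trace_conjTranspose_mul_mul_nonneg hσ X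
  have h₂ := re_trace_mul_mul_conjTranspose_nonneg hρ X
  unfold sylvesterForm at hX
  have hXσ : Xᴴ * σ = 0 := by
    refine mul_eq_zero_of_re_trace_eq_zero hσ ?_
    rw [conjTranspose_conjTranspose]
    nlinarith
  refine ⟨?_, mul_eq_zero_of_re_trace_eq_zero hρ (by nlinarith)⟩
  simpa [hσ.isHermitian.eq] using congrArg conjTranspose hXσ

lemma sylvesterForm_sub (hρ : ρ.IsHermitian) (hσ : σ.IsHermitian)
    (hX : σ * X + (t : ℂ) • (X * ρ) = ρ) (x : Matrix m m ℂ) :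
    sylvesterForm ρ σ t (x - X) =
      sylvesterForm ρ σ t x - 2 * (ρ * x).trace.re + (ρ * X).trace.re := by
  have re_trace_star : ∀ M : Matrix m m ℂ, Mᴴ.trace.re = M.trace.re := by simp
  have key : ∀ y : Matrix m m ℂ,
      (yᴴ * σ * X).trace.re + t * (X * ρ * yᴴ).trace.re = (ρ * y).trace.re := by
    intro y
    rw [Matrix.trace_mul_comm (X * ρ), Matrix.mul_assoc, ← Complex.re_ofReal_mul,
      ← smul_eq_mul (t : ℂ), ← trace_smul, ← Complex.add_re, ← trace_add, ← Matrix.mul_smul,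
      ← Matrix.mul_add, hX, ← re_trace_star, conjTranspose_mul, conjTranspose_conjTranspose, hρ.eq]
  have hcross₁ : (Xᴴ * σ * x).trace.re = (xᴴ * σ * X).trace.re := by
    rw [← re_trace_star]
    simp only [conjTranspose_mul, conjTranspose_conjTranspose, hσ.eq, Matrix.mul_assoc]
  have hcross₂ : (x * ρ * Xᴴ).trace.re = (X * ρ * xᴴ).trace.re := by
    rw [← re_trace_star]
    simp only [conjTranspose_mul, conjTranspose_conjTranspose, hρ.eq, Matrix.mul_assoc]
  simp only [sylvesterForm, conjTranspose_sub, Matrix.sub_mul, Matrix.mul_sub, trace_sub,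
    Complex.sub_re, hcross₁, hcross₂]
  linear_combination key X - 2 * key x

lemma sylvesterForm_eq_re_trace (hρ : ρ.IsHermitian) (hσ : σ.IsHermitian)
    (hX : σ * X + (t : ℂ) • (X * ρ) = ρ) : sylvesterForm ρ σ t X = (ρ * X).trace.re := by
  have h := sylvesterForm_sub hρ hσ hX X
  simp only [sylvesterForm, sub_self, Matrix.mul_zero, Matrix.zero_mul, conjTranspose_zero,
    trace_zero, Complex.zero_re] at h ⊢
  linarith

variable [DecidableEq m] {K : κ → Matrix n m ℂ} {Y : Matrix n n ℂ}

lemma sylvesterForm_krausMap (hK : ∑ k, (K k)ᴴ * K k = 1) (ρ σ : Matrix m m ℂ) (t : ℝ)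
    (Y : Matrix n n ℂ) :
    sylvesterForm (krausMap K ρ) (krausMap K σ) t Y = sylvesterForm ρ σ t (krausDual K Y) +
      (schwarzDefect K σ Yᴴ + t * schwarzDefect K ρ Y) := by
  have hdual : krausDual K Yᴴ = (krausDual K Y)ᴴ := krausMap_conjTranspose _ _
  simp only [schwarzDefect_eq hK, sylvesterForm, hdual, conjTranspose_conjTranspose]
  ring

lemma sylvesterForm_krausDual_sub (hK : ∑ k, (K k)ᴴ * K k = 1) (hρ : ρ.IsHermitian)
    (hσ : σ.IsHermitian) (hX : σ * X + (t : ℂ) • (X * ρ) = ρ)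
    (hY : krausMap K σ * Y + (t : ℂ) • (Y * krausMap K ρ) = krausMap K ρ) :
    sylvesterForm ρ σ t (krausDual K Y - X) + (schwarzDefect K σ Yᴴ + t * schwarzDefect K ρ Y) =
      (ρ * X).trace.re - (krausMap K ρ * Y).trace.re := by
  have isHermitian_krausMap {τ : Matrix m m ℂ} (hτ : τ.IsHermitian) :
      (krausMap K τ).IsHermitian := by
    rw [Matrix.IsHermitian, ← krausMap_conjTranspose, hτ.eq]
  have hform := sylvesterForm_eq_re_trace (isHermitian_krausMap hρ) (isHermitian_krausMap hσ) hY
  rw [sylvesterForm_krausMap hK] at hform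
  rw [sylvesterForm_sub hρ hσ hX, ← trace_krausMap_mul]
  linarith

lemma re_trace_krausMap_mul_le (hK : ∑ k, (K k)ᴴ * K k = 1) (hρ : ρ.PosSemidef)
    (hσ : σ.PosSemidef) (ht : 0 ≤ t) (hX : σ * X + (t : ℂ) • (X * ρ) = ρ)
    (hY : krausMap K σ * Y + (t : ℂ) • (Y * krausMap K ρ) = krausMap K ρ) :
    (krausMap K ρ * Y).trace.re ≤ (ρ * X).trace.re := by
  have h := sylvesterForm_krausDual_sub hK hρ.isHermitian hσ.isHermitian hX hY
  have h₀ := sylvesterForm_nonneg hρ hσ ht (krausDual K Y - X)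
  have h₁ := schwarzDefect_nonneg K hσ Yᴴ
  have h₂ := mul_nonneg ht (schwarzDefect_nonneg K hρ Y)
  linarith

lemma mul_kraus_eq_of_re_trace_eq (hK : ∑ k, (K k)ᴴ * K k = 1) (hρ : ρ.PosSemidef)
    (hσ : σ.PosSemidef) (ht : 0 < t) (hX : σ * X + (t : ℂ) • (X * ρ) = ρ)
    (hY : krausMap K σ * Y + (t : ℂ) • (Y * krausMap K ρ) = krausMap K ρ)
    (heq : (krausMap K ρ * Y).trace.re = (ρ * X).trace.re) (k : κ) :
    σ * (K k)ᴴ * Y = σ * X * (K k)ᴴ ∧ Y * K k * ρ = K k * X * ρ := by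
  have h := sylvesterForm_krausDual_sub hK hρ.isHermitian hσ.isHermitian hX hY
  have h₀ := sylvesterForm_nonneg hρ hσ ht.le (krausDual K Y - X)
  have h₁ := schwarzDefect_nonneg K hσ Yᴴ
  have h₂ := schwarzDefect_nonneg K hρ Y
  have ht₂ := mul_nonneg ht.le h₂
  obtain ⟨hσX, hXρ⟩ := mul_eq_zero_of_sylvesterForm_eq_zero hρ hσ ht
    (le_antisymm (by linarith) h₀)
  have hσY := mul_mul_eq_of_schwarzDefect_eq_zero hσ (le_antisymm (by linarith) h₁) k
  have hYρ := mul_mul_eq_of_schwarzDefect_eq_zero hρ (le_antisymm (by nlinarith) h₂) k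
  rw [Matrix.mul_sub, sub_eq_zero] at hσX
  rw [Matrix.sub_mul, sub_eq_zero] at hXρ
  refine ⟨?_, by rw [hYρ, Matrix.mul_assoc, hXρ, Matrix.mul_assoc]⟩
  have hσY' := congrArg conjTranspose hσY
  simp only [conjTranspose_mul, conjTranspose_conjTranspose, hσ.isHermitian.eq,
    show krausDual K Yᴴ = (krausDual K Y)ᴴ from krausMap_conjTranspose _ _] at hσY'
  rw [Matrix.mul_assoc, hσY', ← Matrix.mul_assoc, hσX]

end SylvesterForm

section LogIntegral
variable {ι : Type*} [Fintype ι] {w r : ι → ℝ}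

lemma hasDerivAt_sum_mul_log_one_add (hw : ∀ i, w i ≠ 0 → 0 < r i) {t : ℝ} (ht : 0 ≤ t) :
    HasDerivAt (fun s => ∑ i, w i * Real.log (1 + s * r i))
      (∑ i, w i * (r i / (1 + t * r i))) t := by
  refine HasDerivAt.fun_sum fun i _ => ?_
  by_cases hi : w i = 0
  · simpa [hi] using hasDerivAt_const t (0 : ℝ)
  · have hpos : 1 + t * r i ≠ 0 := by have := hw i hi; positivity
    have hlin : HasDerivAt (fun s => 1 + s * r i) (r i) t := by
      simpa using ((hasDerivAt_id t).mul_const (r i)).const_add 1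
    exact (hlin.log hpos).const_mul (w i)

lemma tendsto_sum_mul_log_one_add (hw : ∀ i, w i ≠ 0 → 0 < r i) (hsum : ∑ i, w i = 0) :
    Filter.Tendsto (fun s => ∑ i, w i * Real.log (1 + s * r i)) Filter.atTop
      (nhds (∑ i, w i * Real.log (r i))) := by
  have hterm : Filter.Tendsto (fun s => ∑ i, w i * Real.log (1 / s + r i)) Filter.atTop
      (nhds (∑ i, w i * Real.log (r i))) := by
    refine tendsto_finsetSum _ fun i _ => ?_
    by_cases hi : w i = 0
    · simp [hi]
    · have hlim : Filter.Tendsto (fun s : ℝ => 1 / s + r i) Filter.atTop (nhds (r i)) := by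
        simpa using (tendsto_const_nhds (x := (1 : ℝ)).div_atTop Filter.tendsto_id).add_const (r i)
      exact (hlim.log (hw i hi).ne').const_mul (w i)
  refine hterm.congr' ?_
  filter_upwards [Filter.eventually_gt_atTop 0] with s hs
  calc ∑ i, w i * Real.log (1 / s + r i)
      = ∑ i, (w i * Real.log (1 + s * r i) - w i * Real.log s) := by
        refine Finset.sum_congr rfl fun i _ => ?_
        by_cases hi : w i = 0
        · simp [hi]
        · have := hw i hi
          rw [show 1 / s + r i = (1 + s * r i) / s by field_simp,
            Real.log_div (by positivity) hs.ne', mul_sub]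
    _ = ∑ i, w i * Real.log (1 + s * r i) := by
        rw [Finset.sum_sub_distrib, ← Finset.sum_mul, hsum, zero_mul, sub_zero]

lemma monotoneOn_sum_mul_log_one_add (hw : ∀ i, w i ≠ 0 → 0 < r i)
    (hF : ∀ t > 0, 0 ≤ ∑ i, w i * (r i / (1 + t * r i))) :
    MonotoneOn (fun s => ∑ i, w i * Real.log (1 + s * r i)) (Set.Ici 0) := by
  have hderiv {t : ℝ} (ht : 0 ≤ t) := hasDerivAt_sum_mul_log_one_add hw ht
  refine monotoneOn_of_deriv_nonneg (convex_Ici 0)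
    (fun t ht => (hderiv ht).continuousAt.continuousWithinAt) ?_ ?_ <;> rw [interior_Ici]
  · exact fun t ht => (hderiv (le_of_lt ht)).differentiableAt.differentiableWithinAt
  · exact fun t ht => (hderiv (le_of_lt ht)).deriv ▸ hF t ht

lemma sum_mul_log_one_add_mem_Icc (hw : ∀ i, w i ≠ 0 → 0 < r i) (hsum : ∑ i, w i = 0)
    (hF : ∀ t > 0, 0 ≤ ∑ i, w i * (r i / (1 + t * r i))) {s : ℝ} (hs : 0 ≤ s) :
    ∑ i, w i * Real.log (1 + s * r i) ∈ Set.Icc 0 (∑ i, w i * Real.log (r i)) := by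
  have hmono := monotoneOn_sum_mul_log_one_add hw hF
  constructor
  · simpa using hmono Set.self_mem_Ici hs hs
  · refine ge_of_tendsto (tendsto_sum_mul_log_one_add hw hsum) ?_
    filter_upwards [Filter.eventually_ge_atTop s] with u hu
    exact hmono hs (hs.trans hu) hu

lemma sum_mul_log_nonneg (hw : ∀ i, w i ≠ 0 → 0 < r i) (hsum : ∑ i, w i = 0)
    (hF : ∀ t > 0, 0 ≤ ∑ i, w i * (r i / (1 + t * r i))) : 0 ≤ ∑ i, w i * Real.log (r i) :=
  Set.nonempty_Icc.mp ⟨_, sum_mul_log_one_add_mem_Icc hw hsum hF le_rfl⟩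

lemma sum_mul_div_eq_zero_of_sum_mul_log_eq_zero (hw : ∀ i, w i ≠ 0 → 0 < r i)
    (hsum : ∑ i, w i = 0) (hF : ∀ t > 0, 0 ≤ ∑ i, w i * (r i / (1 + t * r i)))
    (hlog : ∑ i, w i * Real.log (r i) = 0) {t : ℝ} (ht : 0 < t) :
    ∑ i, w i * (r i / (1 + t * r i)) = 0 := by
  have hconst : ∀ᶠ s in nhds t, ∑ i, w i * Real.log (1 + s * r i) = 0 := by
    filter_upwards [lt_mem_nhds ht] with s hs
    simpa [hlog] using sum_mul_log_one_add_mem_Icc hw hsum hF hs.le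
  exact (hasDerivAt_sum_mul_log_one_add hw ht.le).unique
    ((hasDerivAt_const t 0).congr_of_eventuallyEq hconst)

end LogIntegral

section ResolventInterpolation
variable {ι E : Type*} [Fintype ι] [AddCommGroup E] [Module ℝ E] [TopologicalSpace E]
  [ContinuousAdd E] [ContinuousSMul ℝ E] [T2Space E] {x : ι → ℝ} {c : ι → E}

lemma sum_smul_eq_zero_of_resolvent (h : ∀ t > 0, ∑ i, (x i / (1 + t * x i)) • c i = 0) :
    ∑ i, x i • c i = 0 := by
  have hcont : ContinuousAt (fun t : ℝ => ∑ i, (x i / (1 + t * x i)) • c i) 0 := by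
    refine tendsto_finsetSum _ fun i _ => ContinuousAt.smul ?_ continuousAt_const
    exact ContinuousAt.div (by fun_prop) (by fun_prop) (by simp)
  have hlim := hcont.tendsto.mono_left (nhdsWithin_le_nhds (s := Set.Ioi 0))
  have hzero := hlim.congr' (eventually_nhdsWithin_of_forall (s := Set.Ioi 0) h)
  simpa using (tendsto_nhds_unique tendsto_const_nhds hzero).symm

lemma sum_pow_succ_smul_eq_zero_of_resolvent (hx : ∀ i, 0 ≤ x i)
    (h : ∀ t > 0, ∑ i, (x i / (1 + t * x i)) • c i = 0) (k : ℕ) :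
    ∑ i, x i ^ (k + 1) • c i = 0 := by
  induction k generalizing c with
  | zero => simpa using sum_smul_eq_zero_of_resolvent h
  | succ k ih =>
    have hstep : ∀ t > 0, ∑ i, (x i / (1 + t * x i)) • x i • c i = 0 := by
      intro t ht
      have hsplit : ∀ i, (x i / (1 + t * x i)) • x i • c i =
          t⁻¹ • x i • c i - t⁻¹ • (x i / (1 + t * x i)) • c i := by
        intro i
        have hden : 1 + t * x i ≠ 0 := by have := hx i; positivity
        rw [smul_smul, smul_smul, smul_smul, ← sub_smul]
        congr 1
        have hcancel := div_mul_cancel₀ (x i) hden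
        generalize x i / (1 + t * x i) = y at hcancel
        rw [← mul_sub, eq_inv_mul_iff_mul_eq₀ ht.ne']
        linear_combination hcancel
      simp only [hsplit, Finset.sum_sub_distrib, ← Finset.smul_sum,
        sum_smul_eq_zero_of_resolvent h, h t ht, smul_zero, sub_zero]
    simpa only [smul_smul, ← pow_succ] using ih hstep

/-- The functions `x ↦ x / (1 + t x)`, `t > 0`, separate points of `(0, ∞)`, so a linear relation
satisfied by all of them extends to every function vanishing at `0`. -/
lemma sum_apply_smul_eq_zero_of_resolvent (hx : ∀ i, 0 ≤ x i)
    (h : ∀ t > 0, ∑ i, (x i / (1 + t * x i)) • c i = 0) {f : ℝ → ℝ} (hf : f 0 = 0) :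
    ∑ i, f (x i) • c i = 0 := by
  let nodes : Finset ℝ := insert 0 (Finset.univ.image x)
  let P := Lagrange.interpolate nodes id f
  have hP : ∀ y ∈ nodes, P.eval y = f y := fun y hy =>
    Lagrange.eval_interpolate_at_node f (Set.injOn_id _) hy
  have hP₀ : P.coeff 0 = 0 := by
    rw [Polynomial.coeff_zero_eq_eval_zero, hP 0 (Finset.mem_insert_self _ _), hf]
  calc ∑ i, f (x i) • c i
      = ∑ k ∈ Finset.range (P.natDegree + 1), P.coeff k • ∑ i, x i ^ k • c i := by
        simp only [Finset.smul_sum, smul_smul]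
        rw [Finset.sum_comm]
        refine Finset.sum_congr rfl fun i _ => ?_
        have hi : x i ∈ nodes :=
          Finset.mem_insert_of_mem (Finset.mem_image_of_mem x (Finset.mem_univ i))
        rw [← hP _ hi, Polynomial.eval_eq_sum_range, Finset.sum_smul]
    _ = 0 := by
        rw [Finset.sum_range_succ']
        simp only [hP₀, zero_smul, add_zero, sum_pow_succ_smul_eq_zero_of_resolvent hx h, smul_zero,
          Finset.sum_const_zero]

end ResolventInterpolation

section FunctionalCalculus
variable {m : Type*} [Fintype m] [DecidableEq m] {A : Matrix m m ℂ}

open scoped MatrixOrder in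
lemma spectrum_real_nonneg (hA : A.PosSemidef) {x : ℝ} (hx : x ∈ spectrum ℝ A) : 0 ≤ x :=
  spectrum_nonneg_of_nonneg hA.nonneg hx

lemma continuousOn_spectrum_real (f : ℝ → ℝ) (A : Matrix m m ℂ) :
    ContinuousOn f (spectrum ℝ A) :=
  Matrix.finite_real_spectrum.continuousOn f

lemma cfc_mul_cfc (f g : ℝ → ℝ) (A : Matrix m m ℂ) :
    cfc f A * cfc g A = cfc (fun x => f x * g x) A :=
  (cfc_mul f g A (continuousOn_spectrum_real f A) (continuousOn_spectrum_real g A)).symm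

lemma cfc_mul_cfc_of_posSemidef (hA : A.PosSemidef) {f g k : ℝ → ℝ}
    (h : ∀ x, 0 ≤ x → f x * g x = k x) : cfc f A * cfc g A = cfc k A := by
  rw [cfc_mul_cfc]
  exact cfc_congr fun x hx => h x (spectrum_real_nonneg hA hx)

lemma self_mul_cfc (hA : A.IsHermitian) (f : ℝ → ℝ) :
    A * cfc f A = cfc (fun x => x * f x) A := by
  rw [← cfc_mul_cfc (fun x => x), cfc_id' ℝ A hA.isSelfAdjoint]

lemma cfc_mul_self (hA : A.IsHermitian) (f : ℝ → ℝ) :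
    cfc f A * A = cfc (fun x => f x * x) A := by
  rw [← cfc_mul_cfc f fun x => x, cfc_id' ℝ A hA.isSelfAdjoint]

lemma isHermitian_cfc (f : ℝ → ℝ) (A : Matrix m m ℂ) : (cfc f A).IsHermitian :=
  cfc_predicate f A

/-- The rank-one projection onto the `i`-th vector of Mathlib's eigenbasis of a Hermitian matrix. -/
noncomputable def eigenprojection (hA : A.IsHermitian) (i : m) : Matrix m m ℂ :=
  Unitary.conjStarAlgAut ℂ _ hA.eigenvectorUnitary (diagonal (Pi.single i 1))

lemma cfc_mul_eigenprojection (hA : A.IsHermitian) (f : ℝ → ℝ) (i : m) :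
    cfc f A * eigenprojection hA i = f (hA.eigenvalues i) • eigenprojection hA i := by
  rw [hA.cfc_eq, Matrix.IsHermitian.cfc, eigenprojection, ← map_mul, ← Complex.coe_smul,
    ← _root_.map_smul, diagonal_mul_diagonal', ← diagonal_smul]
  congr 2
  ext j
  by_cases hj : j = i <;> simp [hj]

lemma eigenprojection_mul_cfc (hA : A.IsHermitian) (f : ℝ → ℝ) (i : m) :
    eigenprojection hA i * cfc f A = f (hA.eigenvalues i) • eigenprojection hA i := by
  rw [← cfc_mul_eigenprojection, hA.cfc_eq, Matrix.IsHermitian.cfc, eigenprojection, ← map_mul,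
    ← map_mul, (commute_diagonal _ _).eq]

lemma sum_eigenprojection (hA : A.IsHermitian) : ∑ i, eigenprojection hA i = 1 := by
  simp only [eigenprojection]
  rw [← map_sum, ← map_one (Unitary.conjStarAlgAut ℂ _ hA.eigenvectorUnitary)]
  congr 1
  ext j k
  by_cases hjk : j = k <;> simp [Matrix.sum_apply, Matrix.one_apply, Pi.single_apply, hjk]

lemma cfc_eq_sum_eigenprojection (hA : A.IsHermitian) (f : ℝ → ℝ) :
    cfc f A = ∑ i, f (hA.eigenvalues i) • eigenprojection hA i := by
  simp only [← cfc_mul_eigenprojection, ← Finset.mul_sum, sum_eigenprojection, Matrix.mul_one]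

lemma trace_cfc (hA : A.IsHermitian) (f : ℝ → ℝ) :
    (cfc f A).trace = ∑ i, (f (hA.eigenvalues i) : ℂ) := by
  rw [hA.cfc_eq, Matrix.IsHermitian.cfc, Unitary.conjStarAlgAut_apply, Matrix.trace_mul_comm,
    ← Matrix.mul_assoc]
  simp [Matrix.trace]

end FunctionalCalculus

section DoubleCalculus
variable {m : Type*} [Fintype m] [DecidableEq m] {ρ σ : Matrix m m ℂ}

/-- The double operator integral `∑ⱼᵢ g(μⱼ, λᵢ) Qⱼ Pᵢ` of `g` for the spectral decompositions
`σ = ∑ⱼ μⱼ Qⱼ` and `ρ = ∑ᵢ λᵢ Pᵢ`. -/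
noncomputable def doubleIntegral (hρ : ρ.IsHermitian) (hσ : σ.IsHermitian) (g : ℝ → ℝ → ℝ) :
    Matrix m m ℂ :=
  ∑ x : m × m, g (hσ.eigenvalues x.1) (hρ.eigenvalues x.2) •
    (eigenprojection hσ x.1 * eigenprojection hρ x.2)

/-- Absolute continuity `ρ ≪ σ`: the range of `ρ` is contained in the range of `σ`. -/
def AbsolutelyContinuous {m : Type*} [Fintype m] (ρ σ : Matrix m m ℂ) : Prop := ∃ Z, ρ = σ * Z

variable (hρ : ρ.IsHermitian) (hσ : σ.IsHermitian)

lemma cfc_mul_doubleIntegral (f : ℝ → ℝ) (g : ℝ → ℝ → ℝ) :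
    cfc f σ * doubleIntegral hρ hσ g = doubleIntegral hρ hσ fun y x => f y * g y x := by
  simp only [doubleIntegral, Finset.mul_sum, Matrix.mul_smul, ← Matrix.mul_assoc,
    cfc_mul_eigenprojection, Matrix.smul_mul, smul_smul, mul_comm]

lemma doubleIntegral_mul_cfc (f : ℝ → ℝ) (g : ℝ → ℝ → ℝ) :
    doubleIntegral hρ hσ g * cfc f ρ = doubleIntegral hρ hσ fun y x => g y x * f x := by
  simp only [doubleIntegral, Finset.sum_mul, Matrix.mul_smul, Matrix.mul_assoc,
    eigenprojection_mul_cfc, Matrix.smul_mul, smul_smul]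

lemma doubleIntegral_mul (f g : ℝ → ℝ) :
    (doubleIntegral hρ hσ fun y x => f y * g x) = cfc f σ * cfc g ρ := by
  rw [cfc_eq_sum_eigenprojection hρ, cfc_eq_sum_eigenprojection hσ, Finset.sum_mul_sum]
  simp only [doubleIntegral, Fintype.sum_prod_type, Matrix.mul_smul, Matrix.smul_mul, smul_smul,
    mul_comm]

lemma doubleIntegral_add_smul (g g' : ℝ → ℝ → ℝ) (t : ℝ) :
    doubleIntegral hρ hσ g + t • doubleIntegral hρ hσ g' =
      doubleIntegral hρ hσ fun y x => g y x + t * g' y x := by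
  simp only [doubleIntegral, Finset.smul_sum, smul_smul, ← Finset.sum_add_distrib, ← add_smul]

lemma eigenprojection_mul_self (hρ : ρ.IsHermitian) (i : m) :
    eigenprojection hρ i * ρ = hρ.eigenvalues i • eigenprojection hρ i := by
  simpa only [cfc_id' ℝ ρ hρ.isSelfAdjoint] using eigenprojection_mul_cfc hρ (fun x => x) i

lemma self_mul_eigenprojection (hρ : ρ.IsHermitian) (i : m) :
    ρ * eigenprojection hρ i = hρ.eigenvalues i • eigenprojection hρ i := by
  simpa only [cfc_id' ℝ ρ hρ.isSelfAdjoint] using cfc_mul_eigenprojection hρ (fun x => x) i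

lemma eigenprojection_mul_eq_zero (h : AbsolutelyContinuous ρ σ) {j i : m}
    (hj : hσ.eigenvalues j = 0) (hi : hρ.eigenvalues i ≠ 0) :
    eigenprojection hσ j * eigenprojection hρ i = 0 := by
  obtain ⟨Z, hZ⟩ := h
  have hσj : eigenprojection hσ j * ρ = 0 := by
    rw [hZ, ← Matrix.mul_assoc, eigenprojection_mul_self, hj, zero_smul, Matrix.zero_mul]
  refine (smul_eq_zero.mp ?_).resolve_left hi
  rw [← Matrix.mul_smul, ← self_mul_eigenprojection, ← Matrix.mul_assoc, hσj, Matrix.zero_mul]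

lemma doubleIntegral_congr (hρ : ρ.PosSemidef) (hσ : σ.PosSemidef)
    (h : AbsolutelyContinuous ρ σ) {g g' : ℝ → ℝ → ℝ}
    (hg : ∀ y x, 0 ≤ y → 0 ≤ x → (y = 0 → x = 0) → g y x = g' y x) :
    doubleIntegral hρ.isHermitian hσ.isHermitian g =
      doubleIntegral hρ.isHermitian hσ.isHermitian g' := by
  refine Finset.sum_congr rfl fun x _ => ?_
  by_cases hzero : hσ.isHermitian.eigenvalues x.1 = 0 → hρ.isHermitian.eigenvalues x.2 = 0
  · rw [hg _ _ (hσ.eigenvalues_nonneg _) (hρ.eigenvalues_nonneg _) hzero]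
  · push Not at hzero
    rw [eigenprojection_mul_eq_zero _ _ h hzero.1 hzero.2, smul_zero, smul_zero]

end DoubleCalculus

section RelativeEntropy
variable {m : Type*} [Fintype m] [DecidableEq m] {ρ σ : Matrix m m ℂ}

/-- The quantum relative entropy `Tr ρ(log ρ - log σ)` in nats. With `Real.log 0 = 0` this is the
usual quantity when `ρ ≪ σ`. -/
noncomputable def relEntropy (ρ σ : Matrix m m ℂ) : ℝ :=
  (ρ * (cfc Real.log ρ - cfc Real.log σ)).trace.re

/-- The Nussbaum–Szkoła weights `λᵢ Tr(Qⱼ Pᵢ)`. -/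
noncomputable def nsWeight (hρ : ρ.IsHermitian) (hσ : σ.IsHermitian) (x : m × m) : ℝ :=
  hρ.eigenvalues x.2 * (eigenprojection hσ x.1 * eigenprojection hρ x.2).trace.re

/-- The likelihood ratios `λᵢ / μⱼ`, which are the eigenvalues of the relative modular operator
`X ↦ σ⁻¹ X ρ`. -/
noncomputable def likelihoodRatio (hρ : ρ.IsHermitian) (hσ : σ.IsHermitian) (x : m × m) : ℝ :=
  hρ.eigenvalues x.2 / hσ.eigenvalues x.1

/-- The function `f` of the relative modular operator `X ↦ σ⁻¹ X ρ`, applied to the identity. -/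
noncomputable def modularCalculus (hρ : ρ.IsHermitian) (hσ : σ.IsHermitian) (f : ℝ → ℝ) :
    Matrix m m ℂ :=
  doubleIntegral hρ hσ fun y x => f (x / y)

lemma modularCalculus_eq_sum (hρ : ρ.IsHermitian) (hσ : σ.IsHermitian) (f : ℝ → ℝ) :
    modularCalculus hρ hσ f = ∑ x, f (likelihoodRatio hρ hσ x) •
      (eigenprojection hσ x.1 * eigenprojection hρ x.2) := rfl

lemma re_trace_mul_doubleIntegral (hρ : ρ.IsHermitian) (hσ : σ.IsHermitian) (g : ℝ → ℝ → ℝ) :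
    (ρ * doubleIntegral hρ hσ g).trace.re =
      ∑ x, nsWeight hρ hσ x * g (hσ.eigenvalues x.1) (hρ.eigenvalues x.2) := by
  rw [Matrix.trace_mul_comm, doubleIntegral, Finset.sum_mul, trace_sum, Complex.re_sum]
  refine Finset.sum_congr rfl fun x _ => ?_
  rw [Matrix.smul_mul, Matrix.mul_assoc, eigenprojection_mul_self, Matrix.mul_smul, trace_smul,
    trace_smul, Complex.smul_re, Complex.smul_re, nsWeight, smul_eq_mul, smul_eq_mul, mul_comm]

lemma re_trace_mul_modularCalculus (hρ : ρ.IsHermitian) (hσ : σ.IsHermitian) (f : ℝ → ℝ) :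
    (ρ * modularCalculus hρ hσ f).trace.re =
      ∑ x, nsWeight hρ hσ x * f (likelihoodRatio hρ hσ x) :=
  re_trace_mul_doubleIntegral hρ hσ _

lemma sum_nsWeight (hρ : ρ.IsHermitian) (hσ : σ.IsHermitian) :
    ∑ x, nsWeight hρ hσ x = ρ.trace.re := by
  have h := re_trace_mul_doubleIntegral hρ hσ fun _ _ => 1 * 1
  rw [doubleIntegral_mul hρ hσ (fun _ => 1) (fun _ => 1), cfc_const_one ℝ ρ hρ.isSelfAdjoint,
    cfc_const_one ℝ σ hσ.isSelfAdjoint, Matrix.one_mul, Matrix.mul_one] at h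
  simpa using h.symm

lemma nsWeight_ne_zero (hρ : ρ.IsHermitian) (hσ : σ.IsHermitian) (h : AbsolutelyContinuous ρ σ)
    {x : m × m} (hx : nsWeight hρ hσ x ≠ 0) :
    hσ.eigenvalues x.1 ≠ 0 ∧ hρ.eigenvalues x.2 ≠ 0 := by
  have hi : hρ.eigenvalues x.2 ≠ 0 := left_ne_zero_of_mul hx
  refine ⟨fun hj => right_ne_zero_of_mul hx ?_, hi⟩
  rw [eigenprojection_mul_eq_zero hρ hσ h hj hi, trace_zero, Complex.zero_re]

lemma likelihoodRatio_pos (hρ : ρ.PosSemidef) (hσ : σ.PosSemidef) (h : AbsolutelyContinuous ρ σ)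
    {x : m × m} (hx : nsWeight hρ.isHermitian hσ.isHermitian x ≠ 0) :
    0 < likelihoodRatio hρ.isHermitian hσ.isHermitian x :=
  have hne := nsWeight_ne_zero _ _ h hx
  div_pos ((hρ.eigenvalues_nonneg _).lt_of_ne' hne.2) ((hσ.eigenvalues_nonneg _).lt_of_ne' hne.1)

lemma likelihoodRatio_nonneg (hρ : ρ.PosSemidef) (hσ : σ.PosSemidef) (x : m × m) :
    0 ≤ likelihoodRatio hρ.isHermitian hσ.isHermitian x :=
  div_nonneg (hρ.eigenvalues_nonneg _) (hσ.eigenvalues_nonneg _)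

lemma relEntropy_eq_sum_nsWeight (hρ : ρ.IsHermitian) (hσ : σ.IsHermitian)
    (h : AbsolutelyContinuous ρ σ) :
    relEntropy ρ σ = ∑ x, nsWeight hρ hσ x * Real.log (likelihoodRatio hρ hσ x) := by
  have hdiff : cfc Real.log ρ - cfc Real.log σ =
      doubleIntegral hρ hσ fun y x => 1 * Real.log x + (-1) * (Real.log y * 1) := by
    rw [← doubleIntegral_add_smul, doubleIntegral_mul hρ hσ (fun _ => 1),
      doubleIntegral_mul hρ hσ _ fun _ => 1, cfc_const_one ℝ ρ hρ.isSelfAdjoint,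
      cfc_const_one ℝ σ hσ.isSelfAdjoint, Matrix.one_mul, Matrix.mul_one, neg_one_smul,
      sub_eq_add_neg]
  rw [relEntropy, hdiff, re_trace_mul_doubleIntegral]
  refine Finset.sum_congr rfl fun x _ => ?_
  by_cases hx : nsWeight hρ hσ x = 0
  · rw [hx, zero_mul, zero_mul]
  · obtain ⟨hj, hi⟩ := nsWeight_ne_zero hρ hσ h hx
    rw [likelihoodRatio, Real.log_div hi hj]
    ring

lemma sylvester_modularCalculus (hρ : ρ.PosSemidef) (hσ : σ.PosSemidef)
    (h : AbsolutelyContinuous ρ σ) {t : ℝ} (ht : 0 < t) :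
    σ * modularCalculus hρ.isHermitian hσ.isHermitian (fun r => r / (1 + t * r)) +
      (t : ℂ) • (modularCalculus hρ.isHermitian hσ.isHermitian (fun r => r / (1 + t * r)) * ρ) =
      ρ := by
  set X := modularCalculus hρ.isHermitian hσ.isHermitian (fun r => r / (1 + t * r)) with hX
  have hleft := cfc_mul_doubleIntegral hρ.isHermitian hσ.isHermitian (fun y => y)
    fun y x => (x / y) / (1 + t * (x / y))
  have hright := doubleIntegral_mul_cfc hρ.isHermitian hσ.isHermitian (fun x => x)
    fun y x => (x / y) / (1 + t * (x / y))
  have hself := doubleIntegral_mul hρ.isHermitian hσ.isHermitian (fun _ => 1) fun x => x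
  rw [cfc_id' ℝ σ hσ.isHermitian.isSelfAdjoint] at hleft
  rw [cfc_id' ℝ ρ hρ.isHermitian.isSelfAdjoint] at hright
  rw [cfc_id' ℝ ρ hρ.isHermitian.isSelfAdjoint, cfc_const_one ℝ σ hσ.isHermitian.isSelfAdjoint,
    Matrix.one_mul] at hself
  rw [hX, modularCalculus, hleft, hright, Complex.coe_smul, doubleIntegral_add_smul]
  refine (doubleIntegral_congr hρ hσ h fun y x hy hx hyx => ?_).trans hself
  rcases hy.eq_or_lt with rfl | hy
  · simp [hyx rfl]
  · have : y + t * x ≠ 0 := by positivity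
    field_simp

lemma modularCalculus_id (hρ : ρ.IsHermitian) (hσ : σ.IsHermitian) :
    modularCalculus hρ hσ (fun r => r) = cfc (fun y : ℝ => y⁻¹) σ * ρ := by
  simpa only [modularCalculus, div_eq_inv_mul, cfc_id' ℝ ρ hρ.isSelfAdjoint] using
    doubleIntegral_mul hρ hσ (fun y => y⁻¹) fun x => x

lemma modularCalculus_sqrt (hρ : ρ.PosSemidef) (hσ : σ.PosSemidef)
    (h : AbsolutelyContinuous ρ σ) :
    modularCalculus hρ.isHermitian hσ.isHermitian Real.sqrt =
      cfc (fun y => (√y)⁻¹) σ * cfc Real.sqrt ρ := by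
  rw [← doubleIntegral_mul]
  refine doubleIntegral_congr hρ hσ h fun y x _ hx _ => ?_
  rw [Real.sqrt_div hx, div_eq_inv_mul]

end RelativeEntropy

section GeneralizedInverse
variable {m : Type*} [Fintype m] [DecidableEq m] {A : Matrix m m ℂ}

/-- The Moore–Penrose inverse of a Hermitian matrix: `x⁻¹` in the functional calculus, where
`0⁻¹ = 0`. -/
noncomputable def pinv (A : Matrix m m ℂ) : Matrix m m ℂ := cfc (fun x : ℝ => x⁻¹) A

/-- The Moore–Penrose inverse `A^{-1/2}` of the square root of a positive semidefinite matrix. -/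
noncomputable def pinvSqrt (A : Matrix m m ℂ) : Matrix m m ℂ := cfc (fun x : ℝ => (√x)⁻¹) A

/-- The orthogonal projection onto the range of a Hermitian matrix. -/
noncomputable def supportProj (A : Matrix m m ℂ) : Matrix m m ℂ := cfc (fun x : ℝ => x * x⁻¹) A

lemma self_mul_pinv (hA : A.IsHermitian) : A * pinv A = supportProj A := self_mul_cfc hA _

lemma pinv_mul_self (hA : A.IsHermitian) : pinv A * A = supportProj A := by
  simpa only [pinv, supportProj, mul_comm] using cfc_mul_self hA fun x => x⁻¹

lemma supportProj_mul_self (hA : A.IsHermitian) : supportProj A * A = A := by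
  rw [supportProj, cfc_mul_self hA]
  simpa only [mul_inv_mul_cancel] using cfc_id' ℝ A hA.isSelfAdjoint

lemma supportProj_mul_cfc (A : Matrix m m ℂ) {f : ℝ → ℝ} (hf : f 0 = 0) :
    supportProj A * cfc f A = cfc f A := by
  rw [supportProj, cfc_mul_cfc]
  refine cfc_congr fun x _ => ?_
  rcases eq_or_ne x 0 with rfl | hx
  · simp only [hf, mul_zero]
  · simp only [mul_inv_cancel₀ hx, one_mul]

lemma supportProj_mul_pinv (A : Matrix m m ℂ) : supportProj A * pinv A = pinv A :=
  supportProj_mul_cfc A inv_zero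

lemma supportProj_mul_pinvSqrt (A : Matrix m m ℂ) : supportProj A * pinvSqrt A = pinvSqrt A :=
  supportProj_mul_cfc A (by simp)

lemma pinvSqrt_mul_supportProj (A : Matrix m m ℂ) : pinvSqrt A * supportProj A = pinvSqrt A :=
  (cfc_commute_cfc _ _ A).eq.trans (supportProj_mul_pinvSqrt A)

lemma pinvSqrt_mul_pinvSqrt (hA : A.PosSemidef) : pinvSqrt A * pinvSqrt A = pinv A :=
  cfc_mul_cfc_of_posSemidef hA fun x hx => by rw [← mul_inv, Real.mul_self_sqrt hx]

lemma sqrt_mul_sqrt (hA : A.PosSemidef) : cfc Real.sqrt A * cfc Real.sqrt A = A := by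
  rw [cfc_mul_cfc_of_posSemidef hA fun x hx => Real.mul_self_sqrt hx]
  exact cfc_id' ℝ A hA.isHermitian.isSelfAdjoint

lemma sqrt_mul_pinvSqrt (hA : A.PosSemidef) : cfc Real.sqrt A * pinvSqrt A = supportProj A := by
  refine cfc_mul_cfc_of_posSemidef hA fun x hx => ?_
  rcases hx.eq_or_lt with rfl | hx
  · simp only [Real.sqrt_zero, zero_mul]
  · rw [mul_inv_cancel₀ (Real.sqrt_pos.mpr hx).ne', mul_inv_cancel₀ hx.ne']

lemma pinvSqrt_mul_sqrt (hA : A.PosSemidef) : pinvSqrt A * cfc Real.sqrt A = supportProj A := by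
  rw [← sqrt_mul_pinvSqrt hA]
  exact cfc_commute_cfc _ _ A

lemma self_mul_pinvSqrt (hA : A.PosSemidef) : A * pinvSqrt A = cfc Real.sqrt A := by
  rw [pinvSqrt, self_mul_cfc hA.isHermitian]
  exact cfc_congr fun x _ => Real.div_sqrt

lemma pinvSqrt_mul_mul_pinvSqrt (hA : A.PosSemidef) (B : Matrix m m ℂ) :
    pinvSqrt B * A * pinvSqrt B =
      pinvSqrt B * cfc Real.sqrt A * (pinvSqrt B * cfc Real.sqrt A)ᴴ := by
  rw [conjTranspose_mul, (isHermitian_cfc _ A).eq, pinvSqrt, (isHermitian_cfc _ B).eq]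
  nth_rw 1 [← sqrt_mul_sqrt hA]
  simp only [Matrix.mul_assoc]

lemma absolutelyContinuous_iff_supportProj_mul {σ ρ : Matrix m m ℂ} (hσ : σ.IsHermitian) :
    AbsolutelyContinuous ρ σ ↔ supportProj σ * ρ = ρ := by
  constructor
  · rintro ⟨Z, rfl⟩
    rw [← Matrix.mul_assoc, supportProj_mul_self hσ]
  · exact fun h => ⟨pinv σ * ρ, by rw [← Matrix.mul_assoc, self_mul_pinv hσ, h]⟩

end GeneralizedInverse

section DataProcessing
variable {κ m n : Type*} [Fintype κ] [Fintype m] [Fintype n] [DecidableEq m] [DecidableEq n]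
  {K : κ → Matrix n m ℂ} {ρ σ : Matrix m m ℂ}

omit [DecidableEq m] [DecidableEq n] in
lemma absolutelyContinuous_krausMap (K : κ → Matrix n m ℂ) (hσ : σ.PosSemidef)
    (h : AbsolutelyContinuous ρ σ) : AbsolutelyContinuous (krausMap K ρ) (krausMap K σ) := by
  classical
  have hΦσ := posSemidef_krausMap K hσ
  rw [absolutelyContinuous_iff_supportProj_mul hΦσ.isHermitian]
  set P := 1 - supportProj (krausMap K σ) with hP
  have hPΦσ : P * krausMap K σ = 0 := by
    rw [hP, Matrix.sub_mul, Matrix.one_mul, supportProj_mul_self hΦσ.isHermitian, sub_self]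
  have hsum : ∑ k, (P * K k * σ * (P * K k)ᴴ).trace.re = 0 := by
    calc ∑ k, (P * K k * σ * (P * K k)ᴴ).trace.re
        = (P * krausMap K σ * Pᴴ).trace.re := by
          rw [← Complex.re_sum, ← trace_sum, krausMap_apply, Finset.mul_sum, Finset.sum_mul]
          simp only [conjTranspose_mul, Matrix.mul_assoc]
      _ = 0 := by rw [hPΦσ, Matrix.zero_mul, trace_zero, Complex.zero_re]
  have hPσ (k : κ) : P * K k * σ = 0 := mul_eq_zero_of_re_trace_eq_zero hσ
    ((Finset.sum_eq_zero_iff_of_nonneg fun _ _ =>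
      re_trace_mul_mul_conjTranspose_nonneg hσ _).mp hsum k (Finset.mem_univ k))
  obtain ⟨Z, rfl⟩ := h
  have hPΦρ : P * krausMap K (σ * Z) = 0 := by
    simp only [krausMap_apply, Finset.mul_sum, ← Matrix.mul_assoc, hPσ, Matrix.zero_mul,
      Finset.sum_const_zero]
  rw [hP, Matrix.sub_mul, Matrix.one_mul, sub_eq_zero] at hPΦρ
  exact hPΦρ.symm

lemma relEntropy_le_of_modularCalculus {ρ' σ' : Matrix n n ℂ} (hρ : ρ.PosSemidef)
    (hσ : σ.PosSemidef) (hρ' : ρ'.PosSemidef) (hσ' : σ'.PosSemidef)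
    (h : AbsolutelyContinuous ρ σ) (h' : AbsolutelyContinuous ρ' σ')
    (htrace : ρ'.trace = ρ.trace)
    (hle : ∀ t > 0,
      (ρ' * modularCalculus hρ'.isHermitian hσ'.isHermitian (fun r => r / (1 + t * r))).trace.re ≤
        (ρ * modularCalculus hρ.isHermitian hσ.isHermitian (fun r => r / (1 + t * r))).trace.re) :
    relEntropy ρ' σ' ≤ relEntropy ρ σ ∧ (relEntropy ρ' σ' = relEntropy ρ σ → ∀ t > 0,
      (ρ' * modularCalculus hρ'.isHermitian hσ'.isHermitian (fun r => r / (1 + t * r))).trace.re =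
      (ρ * modularCalculus hρ.isHermitian hσ.isHermitian (fun r => r / (1 + t * r))).trace.re) := by
  let w : (n × n) ⊕ (m × m) → ℝ := Sum.elim (fun x => -nsWeight hρ'.isHermitian hσ'.isHermitian x)
    (nsWeight hρ.isHermitian hσ.isHermitian)
  let r : (n × n) ⊕ (m × m) → ℝ := Sum.elim (likelihoodRatio hρ'.isHermitian hσ'.isHermitian)
    (likelihoodRatio hρ.isHermitian hσ.isHermitian)
  have hwr (f : ℝ → ℝ) : ∑ i, w i * f (r i) =
      (ρ * modularCalculus hρ.isHermitian hσ.isHermitian f).trace.re -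
        (ρ' * modularCalculus hρ'.isHermitian hσ'.isHermitian f).trace.re := by
    simp only [re_trace_mul_modularCalculus, Fintype.sum_sum_type, w, r, Sum.elim_inl,
      Sum.elim_inr, neg_mul, Finset.sum_neg_distrib]
    ring
  have hlog : ∑ i, w i * Real.log (r i) = relEntropy ρ σ - relEntropy ρ' σ' := by
    rw [hwr, re_trace_mul_modularCalculus, re_trace_mul_modularCalculus,
      ← relEntropy_eq_sum_nsWeight _ _ h, ← relEntropy_eq_sum_nsWeight _ _ h']
  have hpos : ∀ i, w i ≠ 0 → 0 < r i := by
    rintro (i | i) hi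
    · exact likelihoodRatio_pos hρ' hσ' h' (neg_ne_zero.mp hi)
    · exact likelihoodRatio_pos hρ hσ h hi
  have hsum : ∑ i, w i = 0 := by
    simp only [Fintype.sum_sum_type, w, Sum.elim_inl, Sum.elim_inr, Finset.sum_neg_distrib,
      sum_nsWeight, htrace, neg_add_cancel]
  have hF : ∀ t > 0, 0 ≤ ∑ i, w i * (r i / (1 + t * r i)) := fun t ht => by
    rw [hwr fun r => r / (1 + t * r)]
    exact sub_nonneg.mpr (hle t ht)
  refine ⟨sub_nonneg.mp (hlog ▸ sum_mul_log_nonneg hpos hsum hF), fun heq t ht => ?_⟩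
  have hzero := sum_mul_div_eq_zero_of_sum_mul_log_eq_zero hpos hsum hF
    (hlog.trans (sub_eq_zero.mpr heq.symm)) ht
  rw [hwr fun r => r / (1 + t * r)] at hzero
  exact (sub_eq_zero.mp hzero).symm

lemma mul_modularCalculus_mul_eq_of_resolvent {k l : Type*} [Finite k] [Finite l]
    {ρ' σ' : Matrix n n ℂ} (hρ : ρ.PosSemidef) (hσ : σ.PosSemidef) (hρ' : ρ'.PosSemidef)
    (hσ' : σ'.PosSemidef) (A' : Matrix k n ℂ) (B' : Matrix n l ℂ) (A : Matrix k m ℂ)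
    (B : Matrix m l ℂ)
    (h : ∀ t > 0,
      A' * modularCalculus hρ'.isHermitian hσ'.isHermitian (fun r => r / (1 + t * r)) * B' =
        A * modularCalculus hρ.isHermitian hσ.isHermitian (fun r => r / (1 + t * r)) * B)
    {f : ℝ → ℝ} (hf : f 0 = 0) :
    A' * modularCalculus hρ'.isHermitian hσ'.isHermitian f * B' =
      A * modularCalculus hρ.isHermitian hσ.isHermitian f * B := by
  let x : (n × n) ⊕ (m × m) → ℝ := Sum.elim (likelihoodRatio hρ'.isHermitian hσ'.isHermitian)
    (likelihoodRatio hρ.isHermitian hσ.isHermitian)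
  let c : (n × n) ⊕ (m × m) → Matrix k l ℂ := Sum.elim
    (fun i => A' * (eigenprojection hσ'.isHermitian i.1 * eigenprojection hρ'.isHermitian i.2) * B')
    (fun i => -(A * (eigenprojection hσ.isHermitian i.1 * eigenprojection hρ.isHermitian i.2) * B))
  have hxc (f : ℝ → ℝ) : ∑ i, f (x i) • c i =
      A' * modularCalculus hρ'.isHermitian hσ'.isHermitian f * B' -
        A * modularCalculus hρ.isHermitian hσ.isHermitian f * B := by
    simp only [modularCalculus_eq_sum, Matrix.mul_sum, Matrix.sum_mul, Matrix.mul_smul,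
      Matrix.smul_mul, Fintype.sum_sum_type, x, c, Sum.elim_inl, Sum.elim_inr, smul_neg,
      Finset.sum_neg_distrib, sub_eq_add_neg]
  have hx : ∀ i, 0 ≤ x i := by
    rintro (i | i)
    · exact likelihoodRatio_nonneg hρ' hσ' i
    · exact likelihoodRatio_nonneg hρ hσ i
  have hresolvent : ∀ t > 0, ∑ i, (x i / (1 + t * x i)) • c i = 0 := fun t ht =>
    (hxc fun r => r / (1 + t * r)).trans (sub_eq_zero.mpr (h t ht))
  exact sub_eq_zero.mp ((hxc f).symm.trans (sum_apply_smul_eq_zero_of_resolvent hx hresolvent hf))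

lemma re_trace_krausMap_mul_modularCalculus_le (hK : ∑ k, (K k)ᴴ * K k = 1) (hρ : ρ.PosSemidef)
    (hσ : σ.PosSemidef) (h : AbsolutelyContinuous ρ σ) {t : ℝ} (ht : 0 < t) :
    (krausMap K ρ * modularCalculus (posSemidef_krausMap K hρ).isHermitian
      (posSemidef_krausMap K hσ).isHermitian (fun r => r / (1 + t * r))).trace.re ≤
        (ρ * modularCalculus hρ.isHermitian hσ.isHermitian (fun r => r / (1 + t * r))).trace.re :=
  re_trace_krausMap_mul_le hK hρ hσ ht.le (sylvester_modularCalculus hρ hσ h ht)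
    (sylvester_modularCalculus (posSemidef_krausMap K hρ) (posSemidef_krausMap K hσ)
      (absolutelyContinuous_krausMap K hσ h) ht)

theorem relEntropy_krausMap_le (hK : ∑ k, (K k)ᴴ * K k = 1) (hρ : ρ.PosSemidef)
    (hσ : σ.PosSemidef) (h : AbsolutelyContinuous ρ σ) :
    relEntropy (krausMap K ρ) (krausMap K σ) ≤ relEntropy ρ σ :=
  (relEntropy_le_of_modularCalculus hρ hσ (posSemidef_krausMap K hρ) (posSemidef_krausMap K hσ) h
    (absolutelyContinuous_krausMap K hσ h) (trace_krausMap hK ρ)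
    fun _ ht => re_trace_krausMap_mul_modularCalculus_le hK hρ hσ h ht).1

lemma modularCalculus_intertwining (hK : ∑ k, (K k)ᴴ * K k = 1) (hρ : ρ.PosSemidef)
    (hσ : σ.PosSemidef) (h : AbsolutelyContinuous ρ σ)
    (heq : relEntropy (krausMap K ρ) (krausMap K σ) = relEntropy ρ σ) {f : ℝ → ℝ} (hf : f 0 = 0)
    (k : κ) :
    σ * (K k)ᴴ * modularCalculus (posSemidef_krausMap K hρ).isHermitian
        (posSemidef_krausMap K hσ).isHermitian f =
      σ * modularCalculus hρ.isHermitian hσ.isHermitian f * (K k)ᴴ ∧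
    modularCalculus (posSemidef_krausMap K hρ).isHermitian
        (posSemidef_krausMap K hσ).isHermitian f * (K k * ρ) =
      K k * modularCalculus hρ.isHermitian hσ.isHermitian f * ρ := by
  have h' := absolutelyContinuous_krausMap K hσ h
  have hΦρ := posSemidef_krausMap K hρ
  have hΦσ := posSemidef_krausMap K hσ
  have hresolvent (t : ℝ) (ht : 0 < t) := mul_kraus_eq_of_re_trace_eq hK hρ hσ ht
    (sylvester_modularCalculus hρ hσ h ht) (sylvester_modularCalculus hΦρ hΦσ h' ht)
    ((relEntropy_le_of_modularCalculus hρ hσ hΦρ hΦσ h h' (trace_krausMap hK ρ)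
      fun _ ht => re_trace_krausMap_mul_modularCalculus_le hK hρ hσ h ht).2 heq t ht) k
  constructor
  · simpa only [Matrix.mul_one] using mul_modularCalculus_mul_eq_of_resolvent hρ hσ hΦρ hΦσ
      (σ * (K k)ᴴ) 1 σ (K k)ᴴ (fun t ht => by rw [Matrix.mul_one, (hresolvent t ht).1]) hf
  · simpa only [Matrix.one_mul] using mul_modularCalculus_mul_eq_of_resolvent hρ hσ hΦρ hΦσ
      1 (K k * ρ) (K k) ρ
      (fun t ht => by rw [Matrix.one_mul, ← Matrix.mul_assoc, (hresolvent t ht).2]) hf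

theorem pinv_mul_mul_kraus (hK : ∑ k, (K k)ᴴ * K k = 1) (hρ : ρ.PosSemidef)
    (hσ : σ.PosSemidef) (h : AbsolutelyContinuous ρ σ)
    (heq : relEntropy (krausMap K ρ) (krausMap K σ) = relEntropy ρ σ) (k : κ) :
    pinv σ * ρ * (K k)ᴴ = supportProj σ * (K k)ᴴ * (pinv (krausMap K σ) * krausMap K ρ) := by
  have hid := (modularCalculus_intertwining hK hρ hσ h heq (f := fun r => r) rfl k).1
  rw [modularCalculus_id, modularCalculus_id, ← pinv, ← pinv] at hid
  calc pinv σ * ρ * (K k)ᴴ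
      = pinv σ * (σ * (pinv σ * ρ) * (K k)ᴴ) := by
        simp only [← Matrix.mul_assoc, pinv_mul_self hσ.isHermitian, supportProj_mul_pinv]
    _ = supportProj σ * (K k)ᴴ * (pinv (krausMap K σ) * krausMap K ρ) := by
        rw [← hid]
        simp only [← Matrix.mul_assoc, pinv_mul_self hσ.isHermitian]

/-- Both intertwining relations for the square root of the modular operator are needed: one moves
`σ^{-1/2} ρ^{1/2}` past the Kraus operator, the other its adjoint. -/
theorem pinvSqrt_mul_mul_pinvSqrt_mul_kraus (hK : ∑ k, (K k)ᴴ * K k = 1) (hρ : ρ.PosSemidef)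
    (hσ : σ.PosSemidef) (h : AbsolutelyContinuous ρ σ)
    (heq : relEntropy (krausMap K ρ) (krausMap K σ) = relEntropy ρ σ) (k : κ) :
    pinvSqrt σ * ρ * pinvSqrt σ * (K k)ᴴ = supportProj σ * (K k)ᴴ *
      (pinvSqrt (krausMap K σ) * krausMap K ρ * pinvSqrt (krausMap K σ)) := by
  have h' := absolutelyContinuous_krausMap K hσ h
  have hΦρ := posSemidef_krausMap K hρ
  have hΦσ := posSemidef_krausMap K hσ
  obtain ⟨hleft, hright⟩ := modularCalculus_intertwining hK hρ hσ h heq Real.sqrt_zero k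
  rw [modularCalculus_sqrt hρ hσ h, modularCalculus_sqrt hΦρ hΦσ h', ← pinvSqrt, ← pinvSqrt]
    at hleft hright
  set r := pinvSqrt σ * cfc Real.sqrt ρ with hr
  set r' := pinvSqrt (krausMap K σ) * cfc Real.sqrt (krausMap K ρ) with hr'
  have hleft' : supportProj σ * (K k)ᴴ * r' = r * (K k)ᴴ := by
    have := congrArg (pinv σ * ·) hleft
    simpa only [← Matrix.mul_assoc, pinv_mul_self hσ.isHermitian, hr,
      supportProj_mul_pinvSqrt] using this
  have hright' : r * (K k)ᴴ * r'ᴴ = r * rᴴ * (K k)ᴴ := by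
    have := congrArg (fun M => pinvSqrt σ * (M * pinvSqrt ρ)ᴴ) hright
    simpa only [Matrix.mul_assoc, self_mul_pinvSqrt hρ, conjTranspose_mul,
      (isHermitian_cfc Real.sqrt ρ).eq, ← Matrix.mul_assoc (pinvSqrt σ), ← hr] using this
  rw [pinvSqrt_mul_mul_pinvSqrt hρ, pinvSqrt_mul_mul_pinvSqrt hΦρ, ← hr, ← hr', ← hright', ← hleft',
    Matrix.mul_assoc]

end DataProcessing

section KrausRepresentation
variable {κ m n : Type*} [Fintype κ] [Fintype m] [Fintype n]

lemma krausMap_single_apply {n : Type*} [DecidableEq m] (K : κ → Matrix n m ℂ) (a a' : m)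
    (s t : n) : krausMap K (single a a' 1) s t = ∑ k, K k s a * star (K k t a') := by
  simp [krausMap_apply, Matrix.sum_apply, Matrix.mul_apply, single_apply, ite_and]

lemma sum_conjTranspose_mul_self_eq_one [DecidableEq m] {K : κ → Matrix n m ℂ}
    (h : ∀ X, (krausMap K X).trace = X.trace) : ∑ k, (K k)ᴴ * K k = 1 := by
  classical
  have hdual : krausDual K 1 = 1 := Matrix.ext_iff_trace_mul_left.mpr fun X => by
    rw [← trace_krausMap_mul, Matrix.mul_one, Matrix.mul_one, h]
  simpa only [krausDual_apply, Matrix.mul_one] using hdual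

/-- Kraus operators are read off a factorization `C = Bᴴ B` of the Choi matrix. -/
lemma exists_eq_krausMap {Λ : Matrix m m ℂ →ₗ[ℂ] Matrix n n ℂ} (hΛ : IsCompletelyPositive Λ) :
    ∃ K : Fin (Fintype.card m) × n → Matrix n m ℂ, Λ = krausMap K := by
  classical
  let e := Fintype.equivFin m
  let v : Fin (Fintype.card m) × m → ℂ := fun x => if x.1 = e x.2 then 1 else 0
  obtain ⟨B, hB⟩ := exists_eq_conjTranspose_mul_self
    (hΛ _ _ (posSemidef_vecMulVec_self_star v))
  have hchoi (a a' : m) (s t : n) :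
      Λ (single a a' 1) s t = idTensor Λ (vecMulVec v (star v)) (e a, s) (e a', t) := by
    refine congrFun (congrFun (congrArg Λ ?_) _) _
    ext b b'
    by_cases ha : a = b <;> by_cases ha' : a' = b' <;>
      simp [v, vecMulVec_apply, ha, ha']
  refine ⟨fun z => of fun s a => star (B z (e a, s)), Matrix.ext_linearMap _ fun a a' => ?_⟩
  refine LinearMap.ext_ring ?_
  ext s t
  rw [LinearMap.comp_apply, LinearMap.comp_apply, singleLinearMap_apply, krausMap_single_apply,
    hchoi, hB]
  simp only [Matrix.mul_apply, conjTranspose_apply, of_apply, star_star]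

lemma exists_eq_krausMap_of_isQuantumChannel [DecidableEq m] {Λ : Matrix m m ℂ →ₗ[ℂ] Matrix n n ℂ}
    (hΛ : IsQuantumChannel Λ) :
    ∃ K : Fin (Fintype.card m) × n → Matrix n m ℂ, Λ = krausMap K ∧ ∑ k, (K k)ᴴ * K k = 1 := by
  obtain ⟨K, rfl⟩ := exists_eq_krausMap hΛ.1
  exact ⟨K, rfl, sum_conjTranspose_mul_self_eq_one hΛ.2⟩

end KrausRepresentation

section TensorMaps
variable {κ m n α β : Type*}

/-- The exchange `A ⊗ B → B ⊗ A` of the two factors of a bipartite matrix. -/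
def swapFactors (ρ : Matrix (α × β) (α × β) ℂ) : Matrix (β × α) (β × α) ℂ :=
  ρ.submatrix Prod.swap Prod.swap

lemma swapFactors_swapFactors (ρ : Matrix (α × β) (α × β) ℂ) :
    swapFactors (swapFactors ρ) = ρ := rfl

lemma swapFactors_kronecker (X : Matrix α α ℂ) (Y : Matrix β β ℂ) :
    swapFactors (X ⊗ₖ Y) = Y ⊗ₖ X := by
  ext p q
  exact mul_comm _ _

lemma idTensor_eq_swapFactors (Γ : Matrix m m ℂ →ₗ[ℂ] Matrix n n ℂ)
    (ρ : Matrix (α × m) (α × m) ℂ) :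
    idTensor Γ ρ = swapFactors (tensorId Γ (swapFactors ρ)) := rfl

lemma posSemidef_swapFactors {ρ : Matrix (α × β) (α × β) ℂ} (hρ : ρ.PosSemidef) :
    (swapFactors ρ).PosSemidef := hρ.submatrix _

lemma tensorId_kronecker (Λ : Matrix m m ℂ →ₗ[ℂ] Matrix n n ℂ) (X : Matrix m m ℂ)
    (Y : Matrix β β ℂ) : tensorId Λ (X ⊗ₖ Y) = Λ X ⊗ₖ Y := by
  ext p q
  have hslice : (of fun a a' => (X ⊗ₖ Y) (a, p.2) (a', q.2)) = Y p.2 q.2 • X := by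
    ext a a'
    exact mul_comm _ _
  rw [tensorId, LinearMap.coe_mk, AddHom.coe_mk, of_apply, hslice, _root_.map_smul,
    Matrix.smul_apply, smul_eq_mul, mul_comm, kroneckerMap_apply]

lemma idTensor_kronecker (Γ : Matrix m m ℂ →ₗ[ℂ] Matrix n n ℂ) (X : Matrix α α ℂ)
    (Y : Matrix m m ℂ) : idTensor Γ (X ⊗ₖ Y) = X ⊗ₖ Γ Y := by
  rw [idTensor_eq_swapFactors, swapFactors_kronecker, tensorId_kronecker, swapFactors_kronecker]

lemma idTensor_tensorId_comm [Finite α] [Finite β] (Λ : Matrix α α ℂ →ₗ[ℂ] Matrix m m ℂ)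
    (Γ : Matrix β β ℂ →ₗ[ℂ] Matrix n n ℂ) (ρ : Matrix (α × β) (α × β) ℂ) :
    idTensor Γ (tensorId Λ ρ) = tensorId Λ (idTensor Γ ρ) := by
  classical
  have := Fintype.ofFinite α
  have := Fintype.ofFinite β
  refine LinearMap.congr_fun (f := idTensor Γ ∘ₗ tensorId Λ) (g := tensorId Λ ∘ₗ idTensor Γ)
    (Matrix.ext_linearMap _ fun p q => LinearMap.ext_ring ?_) ρ
  have hsingle : single p q (1 : ℂ) = single p.1 q.1 1 ⊗ₖ single p.2 q.2 1 := by
    rw [single_kronecker_single, mul_one]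
  simp only [LinearMap.comp_apply, singleLinearMap_apply, hsingle, tensorId_kronecker,
    idTensor_kronecker]

variable [Fintype κ] [Fintype m]

lemma tensorId_krausMap [Fintype β] [DecidableEq β] (K : κ → Matrix n m ℂ) :
    tensorId (krausMap K) = krausMap fun k => K k ⊗ₖ (1 : Matrix β β ℂ) := by
  refine LinearMap.ext fun ρ => ?_
  ext p q
  simp only [tensorId, LinearMap.coe_mk, AddHom.coe_mk, krausMap_apply, Matrix.sum_apply,
    Matrix.mul_apply, Fintype.sum_prod_type, kroneckerMap_apply, conjTranspose_apply, of_apply,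
    one_apply, mul_ite, mul_one, mul_zero, ite_mul, zero_mul, Finset.sum_ite_eq, Finset.mem_univ,
    if_true, apply_ite star, star_zero]

omit [Fintype m] in
lemma sum_conjTranspose_kronecker_one_mul [Fintype n] [Fintype β] [DecidableEq m] [DecidableEq β]
    {K : κ → Matrix n m ℂ} (hK : ∑ k, (K k)ᴴ * K k = 1) :
    ∑ k, (K k ⊗ₖ (1 : Matrix β β ℂ))ᴴ * (K k ⊗ₖ (1 : Matrix β β ℂ)) = 1 := by
  simp only [conjTranspose_kronecker, conjTranspose_one, ← mul_kronecker_mul, Matrix.mul_one]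
  rw [← one_kronecker_one, ← hK]
  ext p q
  simp only [Matrix.sum_apply, kroneckerMap_apply, Finset.sum_mul]

lemma posSemidef_tensorId_krausMap [Finite n] [Finite β] (K : κ → Matrix n m ℂ)
    {ρ : Matrix (m × β) (m × β) ℂ} (hρ : ρ.PosSemidef) :
    (tensorId (krausMap K) ρ).PosSemidef := by
  classical
  have := Fintype.ofFinite β
  exact tensorId_krausMap (β := β) K ▸ posSemidef_krausMap _ hρ

lemma isQuantumChannel_krausMap [Fintype n] [DecidableEq m] {K : κ → Matrix n m ℂ}
    (hK : ∑ k, (K k)ᴴ * K k = 1) : IsQuantumChannel (krausMap K) :=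
  ⟨fun _ _ hM => posSemidef_swapFactors
    (posSemidef_tensorId_krausMap K (posSemidef_swapFactors hM)), trace_krausMap hK⟩

end TensorMaps

section Marginals
variable {κ κ' m α β α₁ α₂ β₁ β₂ : Type*}

/-- Kraus operators of the first marginal `X ↦ Tr₂ (Λ X)` of the map `Λ` with Kraus operators
`L`. -/
def krausFst (L : κ → Matrix (α₁ × α₂) m ℂ) (x : κ × α₂) : Matrix α₁ m ℂ :=
  of fun i a => L x.1 (i, x.2) a

/-- Kraus operators of the second marginal `X ↦ Tr₁ (Λ X)` of the map `Λ` with Kraus operators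
`L`. -/
def krausSnd (L : κ → Matrix (α₁ × α₂) m ℂ) (x : κ × α₁) : Matrix α₂ m ℂ :=
  of fun j a => L x.1 (x.2, j) a

variable [Fintype κ] [Fintype κ'] [Fintype m] [Fintype α] [Fintype β] [Fintype α₁] [Fintype α₂]
  [Fintype β₁] [Fintype β₂]

lemma krausMap_krausFst {α₁ : Type*} (L : κ → Matrix (α₁ × α₂) m ℂ) (X : Matrix m m ℂ) :
    krausMap (krausFst L) X = ptraceRight (krausMap L X) := by
  ext i j
  simp only [krausMap_apply, krausFst, ptraceRight, Matrix.sum_apply, Matrix.mul_apply,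
    Fintype.sum_prod_type, conjTranspose_apply, of_apply]
  rw [Finset.sum_comm]

lemma krausMap_krausSnd {α₂ : Type*} (L : κ → Matrix (α₁ × α₂) m ℂ) (X : Matrix m m ℂ) :
    krausMap (krausSnd L) X = ptraceLeft (krausMap L X) := by
  ext i j
  simp only [krausMap_apply, krausSnd, ptraceLeft, Matrix.sum_apply, Matrix.mul_apply,
    Fintype.sum_prod_type, conjTranspose_apply, of_apply]
  rw [Finset.sum_comm]

lemma sum_conjTranspose_krausFst_mul {m : Type*} (L : κ → Matrix (α₁ × α₂) m ℂ) :
    ∑ x, (krausFst L x)ᴴ * krausFst L x = ∑ k, (L k)ᴴ * L k := by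
  ext a b
  simp only [Matrix.sum_apply, Fintype.sum_prod_type, Matrix.mul_apply, krausFst,
    conjTranspose_apply, of_apply]
  exact Finset.sum_congr rfl fun k _ => Finset.sum_comm

lemma sum_conjTranspose_krausSnd_mul {m : Type*} (L : κ → Matrix (α₁ × α₂) m ℂ) :
    ∑ x, (krausSnd L x)ᴴ * krausSnd L x = ∑ k, (L k)ᴴ * L k := by
  ext a b
  simp only [Matrix.sum_apply, Fintype.sum_prod_type, Matrix.mul_apply, krausSnd,
    conjTranspose_apply, of_apply]

lemma marg11_idTensor_tensorId {α₁ β₁ : Type*} (L : κ → Matrix (α₁ × α₂) α ℂ)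
    (G : κ' → Matrix (β₁ × β₂) β ℂ) (ρ : Matrix (α × β) (α × β) ℂ) :
    marg11 (idTensor (krausMap G) (tensorId (krausMap L) ρ)) =
      idTensor (krausMap (krausFst G)) (tensorId (krausMap (krausFst L)) ρ) := by
  ext p q
  simp only [marg11, idTensor, tensorId, LinearMap.coe_mk, AddHom.coe_mk, of_apply,
    krausMap_krausFst, ptraceRight]
  rw [Finset.sum_comm]
  refine Finset.sum_congr rfl fun b₂ _ => ?_
  rw [← Matrix.sum_apply, ← map_sum]
  refine congrFun (congrFun (congrArg (krausMap G) ?_) _) _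
  ext b b'
  simp only [Matrix.sum_apply, of_apply]

lemma marg22_idTensor_tensorId {α₂ β₂ : Type*} (L : κ → Matrix (α₁ × α₂) α ℂ)
    (G : κ' → Matrix (β₁ × β₂) β ℂ) (ρ : Matrix (α × β) (α × β) ℂ) :
    marg22 (idTensor (krausMap G) (tensorId (krausMap L) ρ)) =
      idTensor (krausMap (krausSnd G)) (tensorId (krausMap (krausSnd L)) ρ) := by
  ext p q
  simp only [marg22, idTensor, tensorId, LinearMap.coe_mk, AddHom.coe_mk, of_apply,
    krausMap_krausSnd, ptraceLeft]
  rw [Finset.sum_comm]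
  refine Finset.sum_congr rfl fun b₁ _ => ?_
  rw [← Matrix.sum_apply, ← map_sum]
  refine congrFun (congrFun (congrArg (krausMap G) ?_) _) _
  ext b b'
  simp only [Matrix.sum_apply, of_apply]

end Marginals

section KroneckerCalculus
variable {m n : Type*} [Fintype m] [DecidableEq m] [Fintype n] [DecidableEq n]
  {A : Matrix m m ℂ} {B : Matrix n n ℂ}

lemma cfc_mul_eq_smul_of_mul_eq_smul {n : Type*} (hA : A.IsHermitian) {R : Matrix m n ℂ} {x : ℝ}
    (hR : A * R = x • R) (f : ℝ → ℝ) : cfc f A * R = f x • R := by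
  have hterm (i : m) : f (hA.eigenvalues i) • (eigenprojection hA i * R) =
      f x • (eigenprojection hA i * R) := by
    by_cases hi : hA.eigenvalues i = x
    · rw [hi]
    · have hcomm : hA.eigenvalues i • (eigenprojection hA i * R) =
          x • (eigenprojection hA i * R) := by
        rw [← Matrix.smul_mul, ← eigenprojection_mul_self, Matrix.mul_assoc, hR, Matrix.mul_smul]
      rw [← sub_eq_zero, ← sub_smul, smul_eq_zero] at hcomm
      rw [hcomm.resolve_left (sub_ne_zero.mpr hi), smul_zero, smul_zero]
  calc cfc f A * R = ∑ i, f (hA.eigenvalues i) • (eigenprojection hA i * R) := by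
        simp only [cfc_eq_sum_eigenprojection hA, Matrix.sum_mul, Matrix.smul_mul]
    _ = f x • R := by
        simp only [hterm, ← Finset.smul_sum, ← Matrix.sum_mul, sum_eigenprojection, Matrix.one_mul]

lemma isHermitian_kronecker {m n : Type*} {A : Matrix m m ℂ} {B : Matrix n n ℂ}
    (hA : A.IsHermitian) (hB : B.IsHermitian) : (A ⊗ₖ B).IsHermitian := by
  rw [Matrix.IsHermitian, conjTranspose_kronecker, hA.eq, hB.eq]

lemma cfc_kronecker (hA : A.IsHermitian) (hB : B.IsHermitian) (f : ℝ → ℝ) :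
    cfc f (A ⊗ₖ B) = ∑ i, ∑ j, f (hA.eigenvalues i * hB.eigenvalues j) •
      (eigenprojection hA i ⊗ₖ eigenprojection hB j) := by
  have hone : ∑ i, ∑ j, eigenprojection hA i ⊗ₖ eigenprojection hB j = 1 := by
    rw [← one_kronecker_one, ← sum_eigenprojection hA, ← sum_eigenprojection hB]
    ext p q
    simp only [Matrix.sum_apply, kroneckerMap_apply, Finset.sum_mul_sum]
  have heigen (i : m) (j : n) : (A ⊗ₖ B) * (eigenprojection hA i ⊗ₖ eigenprojection hB j) =
      (hA.eigenvalues i * hB.eigenvalues j) • (eigenprojection hA i ⊗ₖ eigenprojection hB j) := by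
    rw [← mul_kronecker_mul, self_mul_eigenprojection, self_mul_eigenprojection, smul_kronecker,
      kronecker_smul, smul_smul]
  rw [← Matrix.mul_one (cfc f (A ⊗ₖ B)), ← hone]
  simp only [Matrix.mul_sum,
    cfc_mul_eq_smul_of_mul_eq_smul (isHermitian_kronecker hA hB) (heigen _ _)]

lemma cfc_kronecker_cfc (hA : A.IsHermitian) (hB : B.IsHermitian) (f g : ℝ → ℝ) :
    cfc f A ⊗ₖ cfc g B = ∑ i, ∑ j, (f (hA.eigenvalues i) * g (hB.eigenvalues j)) •
      (eigenprojection hA i ⊗ₖ eigenprojection hB j) := by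
  rw [cfc_eq_sum_eigenprojection hA, cfc_eq_sum_eigenprojection hB]
  ext p q
  simp only [kroneckerMap_apply, Matrix.sum_apply, Matrix.smul_apply, Finset.sum_mul_sum,
    smul_mul_smul_comm]

lemma cfc_kronecker_of_mul (hA : A.PosSemidef) (hB : B.IsHermitian) {f : ℝ → ℝ}
    (hf : ∀ x y, 0 ≤ x → f (x * y) = f x * f y) : cfc f (A ⊗ₖ B) = cfc f A ⊗ₖ cfc f B := by
  simp only [cfc_kronecker hA.isHermitian hB, cfc_kronecker_cfc hA.isHermitian hB,
    hf _ _ (hA.eigenvalues_nonneg _)]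

lemma pinv_kronecker (hA : A.PosSemidef) (hB : B.IsHermitian) :
    pinv (A ⊗ₖ B) = pinv A ⊗ₖ pinv B :=
  cfc_kronecker_of_mul hA hB fun x y _ => mul_inv x y

lemma pinvSqrt_kronecker (hA : A.PosSemidef) (hB : B.IsHermitian) :
    pinvSqrt (A ⊗ₖ B) = pinvSqrt A ⊗ₖ pinvSqrt B :=
  cfc_kronecker_of_mul hA hB fun x y hx => by rw [Real.sqrt_mul hx, mul_inv]

lemma supportProj_kronecker (hA : A.PosSemidef) (hB : B.IsHermitian) :
    supportProj (A ⊗ₖ B) = supportProj A ⊗ₖ supportProj B :=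
  cfc_kronecker_of_mul hA hB fun x y _ => by rw [mul_inv, mul_mul_mul_comm]

lemma cfc_log_kronecker_mul (hA : A.IsHermitian) (hB : B.IsHermitian) :
    cfc Real.log (A ⊗ₖ B) * (A ⊗ₖ B) =
      (cfc Real.log A ⊗ₖ 1 + 1 ⊗ₖ cfc Real.log B) * (A ⊗ₖ B) := by
  have hleft := cfc_kronecker_cfc hA hB (fun x => Real.log x * x) fun x => x
  have hright := cfc_kronecker_cfc hA hB (fun x => x) fun x => Real.log x * x
  rw [cfc_id' ℝ B hB.isSelfAdjoint] at hleft
  rw [cfc_id' ℝ A hA.isSelfAdjoint] at hright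
  rw [cfc_mul_self (isHermitian_kronecker hA hB), Matrix.add_mul, ← mul_kronecker_mul,
    ← mul_kronecker_mul, Matrix.one_mul, Matrix.one_mul, cfc_mul_self hA, cfc_mul_self hB,
    cfc_kronecker hA hB, hleft, hright, ← Finset.sum_add_distrib]
  refine Finset.sum_congr rfl fun i _ => ?_
  rw [← Finset.sum_add_distrib]
  refine Finset.sum_congr rfl fun j _ => ?_
  rw [← add_smul]
  congr 1
  by_cases hi : hA.eigenvalues i = 0
  · simp [hi]
  by_cases hj : hB.eigenvalues j = 0
  · simp [hj]
  rw [Real.log_mul hi hj]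
  ring

end KroneckerCalculus

section Slices
variable {m n k l α β : Type*} [Fintype β]

/-- The slice `Tr_B (ρ (1 ⊗ M))` of a bipartite matrix by an operator `M` on the second factor. -/
def slice (M : Matrix β β ℂ) (ρ : Matrix (m × β) (n × β) ℂ) : Matrix m n ℂ :=
  of fun i j => ∑ x, ∑ y, M y x • ρ (i, x) (j, y)

lemma slice_one [DecidableEq β] (ρ : Matrix (m × β) (m × β) ℂ) : slice 1 ρ = ptraceRight ρ := by
  ext i j
  simp [ptraceRight, slice, one_apply]

lemma slice_conjTranspose (M : Matrix β β ℂ) (ρ : Matrix (m × β) (n × β) ℂ) :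
    slice Mᴴ ρᴴ = (slice M ρ)ᴴ := by
  ext i j
  simp only [slice, of_apply, conjTranspose_apply, star_sum, smul_eq_mul, star_mul']
  exact Finset.sum_comm

lemma isHermitian_slice {M : Matrix β β ℂ} (hM : M.IsHermitian) {ρ : Matrix (m × β) (m × β) ℂ}
    (hρ : ρ.IsHermitian) :
    (slice M ρ).IsHermitian := by
  rw [Matrix.IsHermitian, ← slice_conjTranspose, hM.eq, hρ.eq]

lemma trace_slice_mul [Fintype m] [Fintype n] (M : Matrix β β ℂ)
    (ρ : Matrix (m × β) (n × β) ℂ) (W : Matrix n m ℂ) :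
    (slice M ρ * W).trace = (ρ * (W ⊗ₖ M)).trace := by
  simp only [trace, diag_apply, Matrix.mul_apply, slice, of_apply, Fintype.sum_prod_type,
    kroneckerMap_apply, smul_eq_mul, Finset.sum_mul]
  refine Finset.sum_congr rfl fun i _ => ?_
  rw [Finset.sum_comm]
  refine Finset.sum_congr rfl fun x _ => Finset.sum_congr rfl fun j _ =>
    Finset.sum_congr rfl fun y _ => by ring

lemma slice_kronecker_mul_mul [Fintype m] [Fintype n] [Finite k] [Finite l] {X : Matrix k m ℂ}
    {Z : Matrix n l ℂ} {Y T M : Matrix β β ℂ} (ρ : Matrix (m × β) (n × β) ℂ) :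
    slice M ((X ⊗ₖ Y) * ρ * (Z ⊗ₖ T)) = X * slice (T * M * Y) ρ * Z := by
  classical
  have := Fintype.ofFinite k
  have := Fintype.ofFinite l
  refine Matrix.ext_iff_trace_mul_right.mpr fun W => ?_
  calc (slice M ((X ⊗ₖ Y) * ρ * (Z ⊗ₖ T)) * W).trace
      = (ρ * ((Z ⊗ₖ T) * (W ⊗ₖ M) * (X ⊗ₖ Y))).trace := by
        rw [trace_slice_mul, Matrix.mul_assoc, Matrix.mul_assoc, trace_mul_comm, Matrix.mul_assoc]
    _ = (X * slice (T * M * Y) ρ * Z * W).trace := by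
        rw [← mul_kronecker_mul, ← mul_kronecker_mul, ← trace_slice_mul, Matrix.mul_assoc X,
          Matrix.mul_assoc X, trace_mul_comm X]
        simp only [Matrix.mul_assoc]

lemma trace_mul_kronecker_one [Fintype m] [DecidableEq β] (ρ : Matrix (m × β) (m × β) ℂ)
    (W : Matrix m m ℂ) : (ρ * (W ⊗ₖ (1 : Matrix β β ℂ))).trace = (ptraceRight ρ * W).trace := by
  rw [← trace_slice_mul, slice_one]

lemma slice_tensorId (Λ : Matrix α α ℂ →ₗ[ℂ] Matrix m m ℂ) (M : Matrix β β ℂ)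
    (ρ : Matrix (α × β) (α × β) ℂ) : slice M (tensorId Λ ρ) = Λ (slice M ρ) := by
  have hblocks : slice M ρ = ∑ x, ∑ y, M y x • of fun a a' => ρ (a, x) (a', y) := by
    ext i j
    simp only [slice, of_apply, Matrix.sum_apply, Matrix.smul_apply]
  ext i j
  simp only [hblocks, map_sum, _root_.map_smul, Matrix.sum_apply, Matrix.smul_apply]
  rfl

end Slices

section PartialTraces
variable {m α β : Type*} [Fintype β]

lemma ptraceRight_swapFactors {α β : Type*} [Fintype α] (ρ : Matrix (α × β) (α × β) ℂ) :
    ptraceRight (swapFactors ρ) = ptraceLeft ρ := rfl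

lemma ptraceLeft_swapFactors (ρ : Matrix (α × β) (α × β) ℂ) :
    ptraceLeft (swapFactors ρ) = ptraceRight ρ := rfl

lemma ptraceRight_tensorId (Λ : Matrix α α ℂ →ₗ[ℂ] Matrix m m ℂ)
    (ρ : Matrix (α × β) (α × β) ℂ) : ptraceRight (tensorId Λ ρ) = Λ (ptraceRight ρ) := by
  classical
  rw [← slice_one, slice_tensorId, slice_one]

lemma ptraceLeft_tensorId [Fintype α] [Fintype m] {β : Type*} {Λ : Matrix α α ℂ →ₗ[ℂ] Matrix m m ℂ}
    (hΛ : ∀ X, (Λ X).trace = X.trace) (ρ : Matrix (α × β) (α × β) ℂ) :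
    ptraceLeft (tensorId Λ ρ) = ptraceLeft ρ := by
  ext x y
  exact hΛ (of fun a a' => ρ (a, x) (a', y))

lemma posSemidef_ptraceRight [Finite α] {ρ : Matrix (α × β) (α × β) ℂ} (hρ : ρ.PosSemidef) :
    (ptraceRight ρ).PosSemidef := by
  have hsum : ptraceRight ρ = ∑ b, ρ.submatrix (fun a => (a, b)) fun a => (a, b) := by
    ext i j
    simp only [ptraceRight, of_apply, Matrix.sum_apply, submatrix_apply]
  rw [hsum]
  exact posSemidef_sum _ fun b _ => hρ.submatrix _

lemma posSemidef_ptraceLeft {β : Type*} [Fintype α] [Finite β] {ρ : Matrix (α × β) (α × β) ℂ}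
    (hρ : ρ.PosSemidef) : (ptraceLeft ρ).PosSemidef :=
  ptraceRight_swapFactors ρ ▸ posSemidef_ptraceRight (posSemidef_swapFactors hρ)

end PartialTraces

section MutualInformation
variable {κ m n α β : Type*} [Fintype κ] [Fintype m] [DecidableEq m] [Fintype n] [DecidableEq n]
  [Fintype α] [DecidableEq α] [Fintype β] [DecidableEq β]

lemma swapFactors_mul {α β : Type*} [Fintype α] [Fintype β] (X Y : Matrix (α × β) (α × β) ℂ) :
    swapFactors (X * Y) = swapFactors X * swapFactors Y :=
  submatrix_mul X Y _ _ _ Prod.swap_bijective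

lemma trace_swapFactors {α β : Type*} [Fintype α] [Fintype β] (X : Matrix (α × β) (α × β) ℂ) :
    (swapFactors X).trace = X.trace :=
  (Equiv.prodComm β α).sum_comp fun p => X p p

omit [DecidableEq β] in
lemma trace_mul_one_kronecker (ρ : Matrix (α × β) (α × β) ℂ) (W : Matrix β β ℂ) :
    (ρ * ((1 : Matrix α α ℂ) ⊗ₖ W)).trace = (ptraceLeft ρ * W).trace := by
  rw [← trace_swapFactors, swapFactors_mul, swapFactors_kronecker, trace_mul_kronecker_one,
    ptraceRight_swapFactors]

lemma supportProj_ptraceRight_mul {ρ : Matrix (α × β) (α × β) ℂ} (hρ : ρ.PosSemidef) :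
    (supportProj (ptraceRight ρ) ⊗ₖ (1 : Matrix β β ℂ)) * ρ = ρ := by
  have hA := (posSemidef_ptraceRight hρ).isHermitian
  set Q := 1 - supportProj (ptraceRight ρ)
  have hQA : Q * ptraceRight ρ = 0 := by
    rw [Matrix.sub_mul, Matrix.one_mul, supportProj_mul_self hA, sub_self]
  have htrace : ((Q ⊗ₖ (1 : Matrix β β ℂ)) * ρ * (Q ⊗ₖ (1 : Matrix β β ℂ))ᴴ).trace = 0 := by
    rw [Matrix.mul_assoc, trace_mul_comm, Matrix.mul_assoc, conjTranspose_kronecker,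
      conjTranspose_one, ← mul_kronecker_mul, Matrix.one_mul, trace_mul_kronecker_one,
      trace_mul_comm, Matrix.mul_assoc, hQA, Matrix.mul_zero, trace_zero]
  have hzero := mul_eq_zero_of_re_trace_eq_zero hρ (congrArg Complex.re htrace)
  have hcompl : Q ⊗ₖ (1 : Matrix β β ℂ) = 1 - supportProj (ptraceRight ρ) ⊗ₖ 1 := by
    rw [eq_sub_iff_add_eq, ← add_kronecker, sub_add_cancel, one_kronecker_one]
  rw [hcompl, Matrix.sub_mul, Matrix.one_mul, sub_eq_zero] at hzero
  exact hzero.symm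

lemma supportProj_ptraceLeft_mul {ρ : Matrix (α × β) (α × β) ℂ} (hρ : ρ.PosSemidef) :
    ((1 : Matrix α α ℂ) ⊗ₖ supportProj (ptraceLeft ρ)) * ρ = ρ := by
  have h := congrArg swapFactors (supportProj_ptraceRight_mul (posSemidef_swapFactors hρ))
  rwa [swapFactors_mul, swapFactors_kronecker, swapFactors_swapFactors,
    ptraceRight_swapFactors] at h

omit [DecidableEq α] [DecidableEq β] in
lemma absolutelyContinuous_kronecker_ptrace {ρ : Matrix (α × β) (α × β) ℂ} (hρ : ρ.PosSemidef) :
    AbsolutelyContinuous ρ (ptraceRight ρ ⊗ₖ ptraceLeft ρ) := by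
  classical
  have hA := posSemidef_ptraceRight hρ
  have hB := posSemidef_ptraceLeft hρ
  rw [absolutelyContinuous_iff_supportProj_mul (hA.kronecker hB).isHermitian,
    supportProj_kronecker hA hB.isHermitian, ← Matrix.mul_one (supportProj (ptraceRight ρ)),
    ← Matrix.one_mul (supportProj (ptraceLeft ρ)), mul_kronecker_mul, Matrix.mul_assoc,
    supportProj_ptraceLeft_mul hρ, supportProj_ptraceRight_mul hρ]

lemma vnEntropy_mul_log_two {ρ : Matrix α α ℂ} (hρ : ρ.IsHermitian) :
    vnEntropy ρ * Real.log 2 = -(ρ * cfc Real.log ρ).trace.re := by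
  have hlog : Real.log 2 ≠ 0 := (Real.log_pos one_lt_two).ne'
  rw [self_mul_cfc hρ, trace_cfc hρ, ← Complex.ofReal_sum, Complex.ofReal_re, vnEntropy,
    dif_pos hρ, neg_mul, Finset.sum_mul]
  refine congrArg _ (Finset.sum_congr rfl fun i _ => ?_)
  rw [Real.logb, mul_assoc, div_mul_cancel₀ _ hlog]

lemma vnEntropy_eq_sum_roots {ρ : Matrix α α ℂ} (hρ : ρ.IsHermitian) :
    vnEntropy ρ = -(ρ.charpoly.roots.map fun z => z.re * Real.logb 2 z.re).sum := by
  rw [vnEntropy, dif_pos hρ, hρ.roots_charpoly_eq_eigenvalues, Multiset.map_map]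
  rfl

lemma vnEntropy_swapFactors {ρ : Matrix (α × β) (α × β) ℂ} (hρ : ρ.IsHermitian) :
    vnEntropy (swapFactors ρ) = vnEntropy ρ := by
  have hcharpoly : (swapFactors ρ).charpoly = ρ.charpoly :=
    charpoly_reindex (Equiv.prodComm α β) ρ
  rw [vnEntropy_eq_sum_roots hρ, ← hcharpoly]
  exact vnEntropy_eq_sum_roots (hρ.submatrix _)

lemma mutualInfo_swapFactors {ρ : Matrix (α × β) (α × β) ℂ} (hρ : ρ.IsHermitian) :
    mutualInfo (swapFactors ρ) = mutualInfo ρ := by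
  rw [mutualInfo, mutualInfo, vnEntropy_swapFactors hρ, ptraceRight_swapFactors,
    ptraceLeft_swapFactors, add_comm (vnEntropy (ptraceLeft ρ))]

lemma mutualInfo_mul_log_two {ρ : Matrix (α × β) (α × β) ℂ} (hρ : ρ.PosSemidef) :
    mutualInfo ρ * Real.log 2 = relEntropy ρ (ptraceRight ρ ⊗ₖ ptraceLeft ρ) := by
  have hA := (posSemidef_ptraceRight hρ).isHermitian
  have hB := (posSemidef_ptraceLeft hρ).isHermitian
  obtain ⟨Z, hZ⟩ := absolutelyContinuous_kronecker_ptrace hρ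
  set A := ptraceRight ρ
  set B := ptraceLeft ρ
  have hcross : (ρ * cfc Real.log (A ⊗ₖ B)).trace =
      (A * cfc Real.log A).trace + (B * cfc Real.log B).trace :=
    calc (ρ * cfc Real.log (A ⊗ₖ B)).trace
        = (cfc Real.log (A ⊗ₖ B) * (A ⊗ₖ B) * Z).trace := by
          rw [trace_mul_comm, Matrix.mul_assoc, ← hZ]
      _ = (ρ * (cfc Real.log A ⊗ₖ 1 + 1 ⊗ₖ cfc Real.log B)).trace := by
          rw [cfc_log_kronecker_mul hA hB, Matrix.mul_assoc, ← hZ, trace_mul_comm]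
      _ = (A * cfc Real.log A).trace + (B * cfc Real.log B).trace := by
          rw [Matrix.mul_add, trace_add, trace_mul_kronecker_one, trace_mul_one_kronecker]
  rw [relEntropy, Matrix.mul_sub, trace_sub, hcross, mutualInfo, sub_mul, add_mul,
    vnEntropy_mul_log_two hA, vnEntropy_mul_log_two hB, vnEntropy_mul_log_two hρ.isHermitian,
    Complex.sub_re, Complex.add_re]
  ring

lemma krausMap_kronecker_one_ptrace {n : Type*} [Fintype n] {K : κ → Matrix n m ℂ}
    (hK : ∑ k, (K k)ᴴ * K k = 1) (ρ : Matrix (m × β) (m × β) ℂ) :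
    krausMap (fun k => K k ⊗ₖ (1 : Matrix β β ℂ)) (ptraceRight ρ ⊗ₖ ptraceLeft ρ) =
      ptraceRight (tensorId (krausMap K) ρ) ⊗ₖ ptraceLeft (tensorId (krausMap K) ρ) := by
  rw [← tensorId_krausMap, tensorId_kronecker, ptraceRight_tensorId,
    ptraceLeft_tensorId (trace_krausMap hK)]

theorem mutualInfo_tensorId_le {Λ : Matrix m m ℂ →ₗ[ℂ] Matrix n n ℂ} (hΛ : IsQuantumChannel Λ)
    {ρ : Matrix (m × β) (m × β) ℂ} (hρ : ρ.PosSemidef) :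
    mutualInfo (tensorId Λ ρ) ≤ mutualInfo ρ := by
  obtain ⟨K, rfl, hK⟩ := exists_eq_krausMap_of_isQuantumChannel hΛ
  have hmono := relEntropy_krausMap_le (sum_conjTranspose_kronecker_one_mul (β := β) hK) hρ
    ((posSemidef_ptraceRight hρ).kronecker (posSemidef_ptraceLeft hρ))
    (absolutelyContinuous_kronecker_ptrace hρ)
  rw [krausMap_kronecker_one_ptrace hK, ← tensorId_krausMap, ← mutualInfo_mul_log_two hρ,
    ← mutualInfo_mul_log_two (posSemidef_tensorId_krausMap K hρ)] at hmono
  exact le_of_mul_le_mul_right hmono (Real.log_pos one_lt_two)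

/-- The operator `x` is transported by the Kraus operators `K` relative to `e`: a single output
operator `y` satisfies `x Kₖ† = e Kₖ† y` for all `k`. Equality in the data-processing inequality
takes this form. -/
def IsTransported {κ m n : Type*} [Fintype m] [Fintype n] (K : κ → Matrix n m ℂ)
    (e x : Matrix m m ℂ) : Prop :=
  ∃ y : Matrix n n ℂ, ∀ k, x * (K k)ᴴ = e * (K k)ᴴ * y

variable {K : κ → Matrix n m ℂ} {ρ : Matrix (m × β) (m × β) ℂ}

lemma relEntropy_krausMap_eq_of_mutualInfo_eq (hK : ∑ k, (K k)ᴴ * K k = 1) (hρ : ρ.PosSemidef)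
    (heq : mutualInfo (tensorId (krausMap K) ρ) = mutualInfo ρ) :
    let L := fun k => K k ⊗ₖ (1 : Matrix β β ℂ)
    relEntropy (krausMap L ρ) (krausMap L (ptraceRight ρ ⊗ₖ ptraceLeft ρ)) =
      relEntropy ρ (ptraceRight ρ ⊗ₖ ptraceLeft ρ) := by
  intro L
  rw [krausMap_kronecker_one_ptrace hK, ← tensorId_krausMap, ← mutualInfo_mul_log_two hρ,
    ← mutualInfo_mul_log_two (posSemidef_tensorId_krausMap K hρ), heq]

omit [DecidableEq m] in
lemma slice_mul_supportProj_ptraceLeft (hρ : ρ.PosSemidef) (M : Matrix β β ℂ) :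
    slice (M * supportProj (ptraceLeft ρ)) ρ = slice M ρ := by
  classical
  have h := slice_kronecker_mul_mul (X := (1 : Matrix m m ℂ)) (Z := (1 : Matrix m m ℂ))
    (Y := supportProj (ptraceLeft ρ)) (T := 1) (M := M) ρ
  simpa only [supportProj_ptraceLeft_mul hρ, one_kronecker_one, Matrix.mul_one, Matrix.one_mul]
    using h.symm

omit [DecidableEq m] in
lemma slice_supportProj_ptraceLeft_mul (hρ : ρ.PosSemidef) (M : Matrix β β ℂ) :
    slice (supportProj (ptraceLeft ρ) * M) ρ = slice M ρ := by
  have h := congrArg conjTranspose (slice_mul_supportProj_ptraceLeft hρ Mᴴ)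
  have hsupp : (supportProj (ptraceLeft ρ))ᴴ = supportProj (ptraceLeft ρ) := isHermitian_cfc _ _
  rwa [← slice_conjTranspose, ← slice_conjTranspose, conjTranspose_mul, conjTranspose_conjTranspose,
    hρ.isHermitian.eq, hsupp] at h

lemma isTransported_mul_slice_mul {κ m n : Type*} [Fintype m] [Fintype n] {K : κ → Matrix n m ℂ}
    {ρ : Matrix (m × β) (m × β) ℂ} {X Z e : Matrix m m ℂ} {Y T f : Matrix β β ℂ}
    {R : Matrix (n × β) (n × β) ℂ}
    (h : ∀ k, (X ⊗ₖ Y) * ρ * (Z ⊗ₖ T) * (K k ⊗ₖ (1 : Matrix β β ℂ))ᴴ =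
      (e ⊗ₖ f) * (K k ⊗ₖ (1 : Matrix β β ℂ))ᴴ * R) (M : Matrix β β ℂ) :
    IsTransported K e (X * slice (T * M * Y) ρ * Z) := by
  classical
  refine ⟨slice (M * f) R, fun k => ?_⟩
  have hleft := slice_kronecker_mul_mul (X := X) (Z := Z * (K k)ᴴ) (Y := Y) (T := T) (M := M) ρ
  have hright := slice_kronecker_mul_mul (X := e * (K k)ᴴ) (Z := (1 : Matrix n n ℂ)) (Y := f)
    (T := 1) (M := M) R
  have hk := congrArg (slice M) (h k)
  rw [conjTranspose_kronecker, conjTranspose_one, Matrix.mul_assoc, ← mul_kronecker_mul,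
    ← mul_kronecker_mul, Matrix.mul_one, Matrix.mul_one, hleft, ← Matrix.mul_one (_ * R),
    ← one_kronecker_one, hright, Matrix.one_mul, Matrix.mul_one, ← Matrix.mul_assoc] at hk
  exact hk

theorem isTransported_pinv_mul_slice (hK : ∑ k, (K k)ᴴ * K k = 1) (hρ : ρ.PosSemidef)
    (heq : mutualInfo (tensorId (krausMap K) ρ) = mutualInfo ρ) (M : Matrix β β ℂ) :
    IsTransported K (supportProj (ptraceRight ρ)) (pinv (ptraceRight ρ) * slice M ρ) := by
  have hA := posSemidef_ptraceRight hρ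
  have hB := posSemidef_ptraceLeft hρ
  have hrec := pinv_mul_mul_kraus (sum_conjTranspose_kronecker_one_mul hK) hρ (hA.kronecker hB)
    (absolutelyContinuous_kronecker_ptrace hρ) (relEntropy_krausMap_eq_of_mutualInfo_eq hK hρ heq)
  rw [pinv_kronecker hA hB.isHermitian, supportProj_kronecker hA hB.isHermitian] at hrec
  have hslice := isTransported_mul_slice_mul (K := K) (ρ := ρ) (X := pinv (ptraceRight ρ))
    (Y := pinv (ptraceLeft ρ)) (Z := 1) (T := 1) (e := supportProj (ptraceRight ρ))
    (f := supportProj (ptraceLeft ρ))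
    (fun k => by rw [one_kronecker_one, Matrix.mul_one]; exact hrec k) (M * ptraceLeft ρ)
  rwa [Matrix.mul_one, Matrix.one_mul, Matrix.mul_assoc M, self_mul_pinv hB.isHermitian,
    slice_mul_supportProj_ptraceLeft hρ] at hslice

/-- The slice `Tr_B (ρ (1 ⊗ M))` relative to the marginal `A = Tr_B ρ`, namely
`A^{-1/2} Tr_B (ρ (1 ⊗ M)) A^{-1/2}`. -/
noncomputable def relativeSlice (M : Matrix β β ℂ) (ρ : Matrix (m × β) (m × β) ℂ) : Matrix m m ℂ :=
  pinvSqrt (ptraceRight ρ) * slice M ρ * pinvSqrt (ptraceRight ρ)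

theorem isTransported_relativeSlice (hK : ∑ k, (K k)ᴴ * K k = 1)
    (hρ : ρ.PosSemidef) (heq : mutualInfo (tensorId (krausMap K) ρ) = mutualInfo ρ)
    (M : Matrix β β ℂ) :
    IsTransported K (supportProj (ptraceRight ρ)) (relativeSlice M ρ) := by
  have hA := posSemidef_ptraceRight hρ
  have hB := posSemidef_ptraceLeft hρ
  have hrec := pinvSqrt_mul_mul_pinvSqrt_mul_kraus (sum_conjTranspose_kronecker_one_mul hK) hρ
    (hA.kronecker hB) (absolutelyContinuous_kronecker_ptrace hρ)
    (relEntropy_krausMap_eq_of_mutualInfo_eq hK hρ heq)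
  rw [pinvSqrt_kronecker hA hB.isHermitian, supportProj_kronecker hA hB.isHermitian] at hrec
  set q := cfc Real.sqrt (ptraceLeft ρ)
  have hcancel : pinvSqrt (ptraceLeft ρ) * (q * M * q) * pinvSqrt (ptraceLeft ρ) =
      supportProj (ptraceLeft ρ) * (M * supportProj (ptraceLeft ρ)) := by
    rw [← sqrt_mul_pinvSqrt hB, Matrix.mul_assoc, Matrix.mul_assoc q, Matrix.mul_assoc q,
      Matrix.mul_assoc M, ← Matrix.mul_assoc _ q, pinvSqrt_mul_sqrt hB, sqrt_mul_pinvSqrt hB]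
  have hslice := isTransported_mul_slice_mul hrec (q * M * q)
  rwa [hcancel, slice_supportProj_ptraceLeft_mul hρ, slice_mul_supportProj_ptraceLeft hρ] at hslice

end MutualInformation

section CommutingSlices
variable {κ m α₁ α₂ β : Type*} [Fintype m] [Fintype α₁] [Fintype α₂]

lemma mul_conjTranspose_eq_of_krausFst [DecidableEq α₂] {L : κ → Matrix (α₁ × α₂) m ℂ}
    {x e : Matrix m m ℂ} {y : Matrix α₁ α₁ ℂ}
    (h : ∀ k, x * (krausFst L k)ᴴ = e * (krausFst L k)ᴴ * y) (k : κ) :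
    x * (L k)ᴴ = e * (L k)ᴴ * (y ⊗ₖ (1 : Matrix α₂ α₂ ℂ)) := by
  ext a ⟨i, j⟩
  have hij := congrFun (congrFun (h (k, j)) a) i
  simpa [krausFst, Matrix.mul_apply, Fintype.sum_prod_type, kroneckerMap_apply, one_apply]
    using hij

lemma mul_conjTranspose_eq_of_krausSnd [DecidableEq α₁] {L : κ → Matrix (α₁ × α₂) m ℂ}
    {x e : Matrix m m ℂ} {y : Matrix α₂ α₂ ℂ}
    (h : ∀ k, x * (krausSnd L k)ᴴ = e * (krausSnd L k)ᴴ * y) (k : κ) :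
    x * (L k)ᴴ = e * (L k)ᴴ * ((1 : Matrix α₁ α₁ ℂ) ⊗ₖ y) := by
  ext a ⟨i, j⟩
  have hij := congrFun (congrFun (h (k, i)) a) j
  simpa [krausSnd, Matrix.mul_apply, Fintype.sum_prod_type_right, kroneckerMap_apply, one_apply]
    using hij

variable [DecidableEq m]

theorem commute_of_isTransported [Fintype κ] {L : κ → Matrix (α₁ × α₂) m ℂ}
    (hL : ∑ k, (L k)ᴴ * L k = 1) {x x' e : Matrix m m ℂ} (hx : x * e = x) (hx' : x' * e = x')
    (h : IsTransported (krausFst L) e x) (h' : IsTransported (krausSnd L) e x') :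
    Commute x x' := by
  classical
  obtain ⟨y, hy⟩ := h
  obtain ⟨y', hy'⟩ := h'
  have hfst := mul_conjTranspose_eq_of_krausFst hy
  have hsnd := mul_conjTranspose_eq_of_krausSnd hy'
  have hxx' (k : κ) : x * x' * (L k)ᴴ = e * (L k)ᴴ * (y ⊗ₖ y') := by
    rw [Matrix.mul_assoc, hsnd, ← Matrix.mul_assoc, ← Matrix.mul_assoc, hx, hfst,
      Matrix.mul_assoc, ← mul_kronecker_mul, Matrix.mul_one, Matrix.one_mul]
  have hx'x (k : κ) : x' * x * (L k)ᴴ = e * (L k)ᴴ * (y ⊗ₖ y') := by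
    rw [Matrix.mul_assoc, hfst, ← Matrix.mul_assoc, ← Matrix.mul_assoc, hx', hsnd,
      Matrix.mul_assoc, ← mul_kronecker_mul, Matrix.mul_one, Matrix.one_mul]
  calc x * x' = ∑ k, x * x' * (L k)ᴴ * L k := by
        simp only [Matrix.mul_assoc, ← Matrix.mul_sum, hL, Matrix.mul_one]
    _ = ∑ k, x' * x * (L k)ᴴ * L k := by simp only [hxx', hx'x]
    _ = x' * x := by simp only [Matrix.mul_assoc, ← Matrix.mul_sum, hL, Matrix.mul_one]

/-- The skew-Hermitian `G = q h q⁻¹ - q⁻¹ h q`, `q = √A`, commutes with `h`, and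
`q G q = A h - h A`; hence `Tr (q G q G) = Tr (A (h G - G h)) = 0`, which forces `q G q = 0`. -/
lemma commute_of_commute_pinvSqrt_mul_mul_sqrt {A h : Matrix m m ℂ} (hA : A.PosSemidef)
    (hh : h.IsHermitian) (hsupp : supportProj A * h = h)
    (hcomm : Commute h (pinvSqrt A * h * cfc Real.sqrt A)) : Commute A h := by
  set q := cfc Real.sqrt A
  set r := cfc (fun x => √√x) A
  set w := pinvSqrt A
  have hqH : qᴴ = q := isHermitian_cfc _ _
  have hwH : wᴴ = w := isHermitian_cfc _ _
  have hsupp' : h * supportProj A = h := by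
    simpa only [conjTranspose_mul, hh.eq, (isHermitian_cfc _ A).eq, supportProj]
      using congrArg conjTranspose hsupp
  have hr : rᴴ * r = q := by
    rw [(isHermitian_cfc _ _).eq, cfc_mul_cfc]
    exact cfc_congr fun x _ => Real.mul_self_sqrt (Real.sqrt_nonneg x)
  set G := q * h * w - w * h * q
  have hG : Gᴴ = -G := by
    simp only [G, conjTranspose_sub, conjTranspose_mul, hqH, hwH, hh.eq, Matrix.mul_assoc, neg_sub]
  have hGh : h * G = G * h := by
    have hadj := congrArg conjTranspose hcomm.eq
    simp only [conjTranspose_mul, hqH, hwH, hh.eq, ← Matrix.mul_assoc] at hadj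
    rw [Matrix.mul_sub, Matrix.sub_mul, hcomm.eq, ← Matrix.mul_assoc, ← Matrix.mul_assoc, hadj]
  have hqGq : q * G * q = A * h - h * A :=
    calc q * G * q = (q * q) * (h * (w * q)) - (q * w * h) * (q * q) := by
          simp only [G, Matrix.mul_sub, Matrix.sub_mul, Matrix.mul_assoc]
      _ = A * h - h * A := by
          rw [sqrt_mul_sqrt hA, pinvSqrt_mul_sqrt hA, sqrt_mul_pinvSqrt hA, hsupp, hsupp']
  have htrace : ((r * G) * q * (r * G)ᴴ).trace = 0 :=
    calc ((r * G) * q * (r * G)ᴴ).trace = (q * G * q * Gᴴ).trace := by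
          rw [conjTranspose_mul, ← Matrix.mul_assoc, trace_mul_comm, ← hr]
          simp only [Matrix.mul_assoc]
      _ = -(A * (h * G) - h * (A * G)).trace := by
          rw [hG, hqGq, Matrix.mul_neg, trace_neg, Matrix.sub_mul, Matrix.mul_assoc,
            Matrix.mul_assoc]
      _ = 0 := by
          rw [trace_sub, trace_mul_comm h, Matrix.mul_assoc, hGh, sub_self, neg_zero]
  have hzero := mul_eq_zero_of_re_trace_eq_zero (hr ▸ posSemidef_conjTranspose_mul_self r)
    (congrArg Complex.re htrace)
  refine sub_eq_zero.mp (hqGq.symm.trans ?_)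
  rw [← hr, Matrix.mul_assoc, Matrix.mul_assoc, ← Matrix.mul_assoc r, hr, hzero, Matrix.mul_zero]

lemma commute_sqrt_mul_mul_sqrt {A h h' : Matrix m m ℂ} (hA : A.PosSemidef) (hAh : Commute A h)
    (hAh' : Commute A h') (hhh' : Commute h h') :
    Commute (cfc Real.sqrt A * h * cfc Real.sqrt A) (cfc Real.sqrt A * h' * cfc Real.sqrt A) := by
  set q := cfc Real.sqrt A
  have hq := sqrt_mul_sqrt hA
  calc q * h * q * (q * h' * q) = q * h * (q * q) * h' * q := by simp only [Matrix.mul_assoc]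
    _ = q * A * (h * h') * q := by
        rw [hq, Matrix.mul_assoc q, ← hAh.eq]
        simp only [Matrix.mul_assoc]
    _ = q * A * (h' * h) * q := by rw [hhh'.eq]
    _ = q * h' * (q * q) * h * q := by
        rw [hq, Matrix.mul_assoc q h', ← hAh'.eq]
        simp only [Matrix.mul_assoc]
    _ = q * h' * q * (q * h * q) := by simp only [Matrix.mul_assoc]

variable [Fintype β] {ρ : Matrix (m × β) (m × β) ℂ}
  {L : κ → Matrix (α₁ × α₂) m ℂ}

lemma isHermitian_relativeSlice (hρ : ρ.IsHermitian) {M : Matrix β β ℂ} (hM : M.IsHermitian) :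
    (relativeSlice M ρ).IsHermitian := by
  have h := isHermitian_conjTranspose_mul_mul (pinvSqrt (ptraceRight ρ)) (isHermitian_slice hM hρ)
  rwa [pinvSqrt, (isHermitian_cfc _ _).eq] at h

lemma supportProj_mul_relativeSlice (M : Matrix β β ℂ) (ρ : Matrix (m × β) (m × β) ℂ) :
    supportProj (ptraceRight ρ) * relativeSlice M ρ = relativeSlice M ρ := by
  rw [relativeSlice, ← Matrix.mul_assoc, ← Matrix.mul_assoc, supportProj_mul_pinvSqrt]

lemma relativeSlice_mul_supportProj (M : Matrix β β ℂ) (ρ : Matrix (m × β) (m × β) ℂ) :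
    relativeSlice M ρ * supportProj (ptraceRight ρ) = relativeSlice M ρ := by
  rw [relativeSlice, Matrix.mul_assoc, pinvSqrt_mul_supportProj]

lemma supportProj_ptraceRight_mul_slice (hρ : ρ.PosSemidef) (M : Matrix β β ℂ) :
    supportProj (ptraceRight ρ) * slice M ρ = slice M ρ := by
  classical
  have h := slice_kronecker_mul_mul (X := supportProj (ptraceRight ρ)) (Z := (1 : Matrix m m ℂ))
    (Y := 1) (T := 1) (M := M) ρ
  simpa only [supportProj_ptraceRight_mul hρ, one_kronecker_one, Matrix.mul_one, Matrix.one_mul]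
    using h.symm

lemma slice_mul_supportProj_ptraceRight (hρ : ρ.PosSemidef) {M : Matrix β β ℂ}
    (hM : M.IsHermitian) : slice M ρ * supportProj (ptraceRight ρ) = slice M ρ := by
  simpa only [conjTranspose_mul, (isHermitian_slice hM hρ.isHermitian).eq,
    (isHermitian_cfc _ (ptraceRight ρ)).eq, supportProj]
    using congrArg conjTranspose (supportProj_ptraceRight_mul_slice hρ M)

lemma sqrt_mul_relativeSlice_mul_sqrt (hρ : ρ.PosSemidef) {M : Matrix β β ℂ}
    (hM : M.IsHermitian) :
    cfc Real.sqrt (ptraceRight ρ) * relativeSlice M ρ * cfc Real.sqrt (ptraceRight ρ) =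
      slice M ρ := by
  have hA := posSemidef_ptraceRight hρ
  rw [relativeSlice, ← Matrix.mul_assoc, ← Matrix.mul_assoc, sqrt_mul_pinvSqrt hA,
    supportProj_ptraceRight_mul_slice hρ, Matrix.mul_assoc, pinvSqrt_mul_sqrt hA,
    slice_mul_supportProj_ptraceRight hρ hM]

lemma pinvSqrt_mul_relativeSlice_mul_sqrt (hρ : ρ.PosSemidef) {M : Matrix β β ℂ}
    (hM : M.IsHermitian) :
    pinvSqrt (ptraceRight ρ) * relativeSlice M ρ * cfc Real.sqrt (ptraceRight ρ) =
      pinv (ptraceRight ρ) * slice M ρ := by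
  have hA := posSemidef_ptraceRight hρ
  rw [relativeSlice, ← Matrix.mul_assoc, ← Matrix.mul_assoc, pinvSqrt_mul_pinvSqrt hA,
    Matrix.mul_assoc, pinvSqrt_mul_sqrt hA, Matrix.mul_assoc,
    slice_mul_supportProj_ptraceRight hρ hM]

theorem commute_slice_of_mutualInfo_eq [Fintype κ] [DecidableEq α₁] [DecidableEq α₂] [DecidableEq β]
    (hL : ∑ k, (L k)ᴴ * L k = 1) (hρ : ρ.PosSemidef)
    (hfst : mutualInfo (tensorId (krausMap (krausFst L)) ρ) = mutualInfo ρ)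
    (hsnd : mutualInfo (tensorId (krausMap (krausSnd L)) ρ) = mutualInfo ρ)
    {M M' : Matrix β β ℂ} (hM : M.IsHermitian) (hM' : M'.IsHermitian) :
    Commute (slice M ρ) (slice M' ρ) := by
  have hL₁ := (sum_conjTranspose_krausFst_mul L).trans hL
  have hL₂ := (sum_conjTranspose_krausSnd_mul L).trans hL
  have hrel {x : Matrix m m ℂ} (hx : x * supportProj (ptraceRight ρ) = x)
      (htrans : IsTransported (krausSnd L) (supportProj (ptraceRight ρ)) x) (M : Matrix β β ℂ) :
      Commute (relativeSlice M ρ) x :=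
    commute_of_isTransported hL (relativeSlice_mul_supportProj M ρ) hx
      (isTransported_relativeSlice hL₁ hρ hfst M) htrans
  have hmarginal {M : Matrix β β ℂ} (hM : M.IsHermitian) :
      Commute (ptraceRight ρ) (relativeSlice M ρ) := by
    refine commute_of_commute_pinvSqrt_mul_mul_sqrt (posSemidef_ptraceRight hρ)
      (isHermitian_relativeSlice hρ.isHermitian hM) (supportProj_mul_relativeSlice M ρ) ?_
    rw [pinvSqrt_mul_relativeSlice_mul_sqrt hρ hM]
    refine hrel ?_ (isTransported_pinv_mul_slice hL₂ hρ hsnd M) M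
    rw [Matrix.mul_assoc, slice_mul_supportProj_ptraceRight hρ hM]
  rw [← sqrt_mul_relativeSlice_mul_sqrt hρ hM, ← sqrt_mul_relativeSlice_mul_sqrt hρ hM']
  exact commute_sqrt_mul_mul_sqrt (posSemidef_ptraceRight hρ) (hmarginal hM) (hmarginal hM')
    (hrel (relativeSlice_mul_supportProj M' ρ) (isTransported_relativeSlice hL₂ hρ hsnd M') M)

end CommutingSlices

section SimultaneousDiagonalization
variable {ι m β : Type*} [Fintype m] [DecidableEq m] [Fintype β]

omit [DecidableEq m] in
lemma exists_orthonormalBasis_hasEigenvector {E : Type*} [NormedAddCommGroup E]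
    [InnerProductSpace ℂ E] [FiniteDimensional ℂ E] (hdim : Module.finrank ℂ E = Fintype.card m)
    {T : ι → Module.End ℂ E} (hT : ∀ j, (T j).IsSymmetric)
    (hcomm : Pairwise (Function.onFun Commute T)) :
    ∃ b : OrthonormalBasis m ℂ E, ∀ j i, ∃ c : ℂ, T j (b i) = c • b i := by
  classical
  have hinternal := LinearMap.IsSymmetric.directSum_isInternal_of_pairwise_commute hT hcomm
  have hinternal' := DirectSum.isInternal_ne_bot_iff.mpr hinternal
  have := hinternal.submodule_iSupIndep.fintypeNeBotOfFiniteDimensional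
  have horth := (LinearMap.IsSymmetric.orthogonalFamily_iInf_eigenspaces hT).comp
    (γ := {γ : ι → ℂ // (⨅ j, Module.End.eigenspace (T j) (γ j)) ≠ ⊥}) Subtype.val_injective
  refine ⟨(hinternal'.subordinateOrthonormalBasis hdim horth).reindex
    (Fintype.equivFin m).symm, fun j i => ?_⟩
  have hmem := hinternal'.subordinateOrthonormalBasis_subordinate hdim (Fintype.equivFin m i) horth
  rw [Submodule.mem_iInf] at hmem
  rw [OrthonormalBasis.reindex_apply, Equiv.symm_symm]
  exact ⟨_, Module.End.mem_eigenspace_iff.mp (hmem j)⟩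

lemma exists_unitary_isDiag {A : ι → Matrix m m ℂ} (hA : ∀ j, (A j).IsHermitian)
    (hcomm : ∀ i j, Commute (A i) (A j)) :
    ∃ V ∈ unitaryGroup m ℂ, ∀ j, (Vᴴ * A j * V).IsDiag := by
  let T (j : ι) : Module.End ℂ (EuclideanSpace ℂ m) := toEuclideanLin (A j)
  have hT (i j : ι) : Commute (T i) (T j) := by
    rw [commute_iff_eq]
    ext x
    simp [T, mulVec_mulVec, (hcomm i j).eq]
  obtain ⟨b, hb⟩ := exists_orthonormalBasis_hasEigenvector
    (E := EuclideanSpace ℂ m) finrank_euclideanSpace (T := T)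
    (fun j => isSymmetric_toEuclideanLin_iff.mpr (hA j)) fun i j _ => hT i j
  let v (i : m) : m → ℂ := (b i).ofLp
  have hortho (i i' : m) : star (v i) ⬝ᵥ v i' = if i = i' then 1 else 0 := by
    rw [← orthonormal_iff_ite.mp b.orthonormal i i', EuclideanSpace.inner_eq_star_dotProduct,
      dotProduct_comm]
  refine ⟨(of v)ᵀ, mem_unitaryGroup_iff'.mpr (Matrix.ext hortho), fun j i i' hne => ?_⟩
  obtain ⟨c, hc⟩ := hb j i'
  have heigen : A j *ᵥ v i' = c • v i' := congrArg WithLp.ofLp hc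
  calc ((of v)ᵀᴴ * A j * (of v)ᵀ) i i' = star (v i) ⬝ᵥ A j *ᵥ v i' := by
        rw [Matrix.mul_assoc]
        rfl
    _ = 0 := by rw [heigen, dotProduct_smul, hortho, if_neg hne, smul_zero]

lemma slice_eq_realPart_add_imaginaryPart {m n : Type*} (M : Matrix β β ℂ)
    (ρ : Matrix (m × β) (n × β) ℂ) :
    slice M ρ = slice (realPart M : Matrix β β ℂ) ρ +
      Complex.I • slice (imaginaryPart M : Matrix β β ℂ) ρ := by
  conv_lhs => rw [← realPart_add_I_smul_imaginaryPart M]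
  ext i j
  simp only [slice, of_apply, Matrix.add_apply, Matrix.smul_apply, add_smul, smul_assoc,
    Finset.sum_add_distrib, Finset.smul_sum]

lemma slice_single {m n : Type*} [DecidableEq β] (x y : β) (ρ : Matrix (m × β) (n × β) ℂ) (i : m)
    (j : n) : slice (single y x 1) ρ i j = ρ (i, x) (j, y) := by
  simp [slice, single_apply, ite_and]

lemma exists_unitary_isDiag_slice {ρ : Matrix (m × β) (m × β) ℂ} (hρ : ρ.IsHermitian)
    (hcomm : ∀ {M M' : Matrix β β ℂ}, M.IsHermitian → M'.IsHermitian →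
      Commute (slice M ρ) (slice M' ρ)) :
    ∃ V ∈ unitaryGroup m ℂ, ∀ M, (Vᴴ * slice M ρ * V).IsDiag := by
  obtain ⟨V, hV, hdiag⟩ := exists_unitary_isDiag
    (A := fun M : {M : Matrix β β ℂ // M.IsHermitian} => slice M.1 ρ)
    (fun M => isHermitian_slice M.2 hρ) fun M M' => hcomm M.2 M'.2
  refine ⟨V, hV, fun M => ?_⟩
  rw [slice_eq_realPart_add_imaginaryPart, Matrix.mul_add, Matrix.add_mul, Matrix.mul_smul,
    Matrix.smul_mul]
  exact (hdiag ⟨_, (realPart M).2⟩).add ((hdiag ⟨_, (imaginaryPart M).2⟩).smul _)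

end SimultaneousDiagonalization

section ProductDiagonal
variable {m β : Type*} [Fintype m] [DecidableEq m] [Fintype β] [DecidableEq β]
  {V : Matrix m m ℂ} {W : Matrix β β ℂ} {ρ : Matrix (m × β) (m × β) ℂ}

omit [DecidableEq m] [DecidableEq β] in
lemma conj_kronecker_apply_eq_zero (hV : ∀ M, (Vᴴ * slice M ρ * V).IsDiag) (W : Matrix β β ℂ)
    {i i' : m} (hne : i ≠ i') (x x' : β) :
    ((V ⊗ₖ W)ᴴ * ρ * (V ⊗ₖ W)) (i, x) (i', x') = 0 := by
  classical
  refine (slice_single x x' ((V ⊗ₖ W)ᴴ * ρ * (V ⊗ₖ W)) i i').symm.trans ?_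
  rw [conjTranspose_kronecker, slice_kronecker_mul_mul]
  exact hV _ hne

omit [DecidableEq m] [DecidableEq β] in
lemma swapFactors_conj_kronecker :
    swapFactors ((V ⊗ₖ W)ᴴ * ρ * (V ⊗ₖ W)) = (W ⊗ₖ V)ᴴ * swapFactors ρ * (W ⊗ₖ V) := by
  simp only [conjTranspose_kronecker, swapFactors_mul, swapFactors_kronecker]

omit [DecidableEq m] [DecidableEq β] in
lemma isDiag_conj_kronecker (hV : ∀ M, (Vᴴ * slice M ρ * V).IsDiag)
    (hW : ∀ M, (Wᴴ * slice M (swapFactors ρ) * W).IsDiag) :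
    ((V ⊗ₖ W)ᴴ * ρ * (V ⊗ₖ W)).IsDiag := by
  rintro ⟨i, x⟩ ⟨i', x'⟩ hne
  by_cases hi : i = i'
  · have hx : x ≠ x' := fun hx => hne (Prod.ext hi hx)
    have hzero := conj_kronecker_apply_eq_zero hW V hx i i'
    rwa [← swapFactors_conj_kronecker] at hzero
  · exact conj_kronecker_apply_eq_zero hV W hi x x'

lemma dotProduct_of_mem_unitaryGroup (hV : V ∈ unitaryGroup m ℂ) (i i' : m) :
    star (Vᵀ i) ⬝ᵥ Vᵀ i' = if i = i' then 1 else 0 := by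
  rw [← one_apply, ← mem_unitaryGroup_iff'.mp hV]
  rfl

lemma classicalClassical_of_isDiag (hρ : IsDensityMatrix ρ) (hV : V ∈ unitaryGroup m ℂ)
    (hW : W ∈ unitaryGroup β ℂ) (hdiag : ((V ⊗ₖ W)ᴴ * ρ * (V ⊗ₖ W)).IsDiag) :
    ClassicalClassical ρ := by
  have hU : (V ⊗ₖ W) * (V ⊗ₖ W)ᴴ = 1 := mem_unitaryGroup_iff.mp (kronecker_mem_unitary hV hW)
  set R := (V ⊗ₖ W)ᴴ * ρ * (V ⊗ₖ W) with hR
  have hRpsd : R.PosSemidef := hρ.1.conjTranspose_mul_mul_same _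
  have hRdiag (x : m × β) : ((R x x).re : ℂ) = R x x :=
    Complex.conj_eq_iff_re.mp (hRpsd.1.apply x x)
  have hρR : ρ = (V ⊗ₖ W) * diagonal R.diag * (V ⊗ₖ W)ᴴ := by
    rw [hdiag.diagonal_diag, hR, Matrix.mul_assoc, Matrix.mul_assoc, hU, Matrix.mul_one,
      ← Matrix.mul_assoc, hU, Matrix.one_mul]
  refine ⟨fun i j => (R (i, j) (i, j)).re, Vᵀ, Wᵀ,
    fun i j => (Complex.nonneg_iff.mp hRpsd.diag_nonneg).1, ?_,
    dotProduct_of_mem_unitaryGroup hV, dotProduct_of_mem_unitaryGroup hW, ?_⟩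
  · have htrace : R.trace = 1 := by
      rw [hR, trace_mul_comm, ← Matrix.mul_assoc, hU, Matrix.one_mul, hρ.2]
    simpa [Matrix.trace, Fintype.sum_prod_type] using congrArg Complex.re htrace
  · conv_lhs => rw [hρR]
    ext ⟨a, b⟩ ⟨a', b'⟩
    rw [Matrix.mul_apply]
    simp only [hRdiag, Matrix.mul_diagonal, Fintype.sum_prod_type,
      kroneckerMap_apply, conjTranspose_apply, Matrix.sum_apply, Matrix.smul_apply,
      vecMulVec_apply, Pi.star_apply, smul_eq_mul, star_mul', transpose_apply, diag_apply]
    exact Finset.sum_congr rfl fun _ _ => Finset.sum_congr rfl fun _ _ => by ring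

theorem classicalClassical_of_commute_slice (hρ : IsDensityMatrix ρ)
    (hfst : ∀ {M M' : Matrix β β ℂ}, M.IsHermitian → M'.IsHermitian →
      Commute (slice M ρ) (slice M' ρ))
    (hsnd : ∀ {M M' : Matrix m m ℂ}, M.IsHermitian → M'.IsHermitian →
      Commute (slice M (swapFactors ρ)) (slice M' (swapFactors ρ))) :
    ClassicalClassical ρ := by
  obtain ⟨V, hV, hVdiag⟩ := exists_unitary_isDiag_slice hρ.1.isHermitian hfst
  obtain ⟨W, hW, hWdiag⟩ :=
    exists_unitary_isDiag_slice (posSemidef_swapFactors hρ.1).isHermitian hsnd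
  exact classicalClassical_of_isDiag hρ hV hW (isDiag_conj_kronecker hVdiag hWdiag)

end ProductDiagonal

section BroadcastingImpliesClassical
variable {m n α α₁ α₂ β β₁ β₂ : Type*} [Fintype m] [DecidableEq m] [Fintype n] [DecidableEq n]
  [Fintype α] [DecidableEq α] [Fintype α₁] [DecidableEq α₁] [Fintype α₂] [DecidableEq α₂]
  [Fintype β] [DecidableEq β] [Fintype β₁] [DecidableEq β₁] [Fintype β₂] [DecidableEq β₂]

lemma posSemidef_tensorId {m n β : Type*} [Finite m] [Finite n] [Finite β]
    {Λ : Matrix m m ℂ →ₗ[ℂ] Matrix n n ℂ} (hΛ : IsCompletelyPositive Λ)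
    {ρ : Matrix (m × β) (m × β) ℂ} (hρ : ρ.PosSemidef) : (tensorId Λ ρ).PosSemidef := by
  cases nonempty_fintype m
  cases nonempty_fintype n
  obtain ⟨K, rfl⟩ := exists_eq_krausMap hΛ
  exact posSemidef_tensorId_krausMap K hρ

lemma mutualInfo_idTensor_le {Γ : Matrix m m ℂ →ₗ[ℂ] Matrix n n ℂ} (hΓ : IsQuantumChannel Γ)
    {ρ : Matrix (α × m) (α × m) ℂ} (hρ : ρ.PosSemidef) :
    mutualInfo (idTensor Γ ρ) ≤ mutualInfo ρ := by
  have hswap := posSemidef_swapFactors hρ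
  rw [idTensor_eq_swapFactors, mutualInfo_swapFactors (posSemidef_tensorId hΓ.1 hswap).isHermitian,
    ← mutualInfo_swapFactors hρ.isHermitian]
  exact mutualInfo_tensorId_le hΓ hswap

variable {ρ : Matrix (α × β) (α × β) ℂ}

lemma mutualInfo_tensorId_eq {Λ : Matrix α α ℂ →ₗ[ℂ] Matrix m m ℂ}
    {Γ : Matrix β β ℂ →ₗ[ℂ] Matrix n n ℂ} (hΛ : IsQuantumChannel Λ) (hΓ : IsQuantumChannel Γ)
    (hρ : ρ.PosSemidef) (heq : mutualInfo (idTensor Γ (tensorId Λ ρ)) = mutualInfo ρ) :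
    mutualInfo (tensorId Λ ρ) = mutualInfo ρ :=
  le_antisymm (mutualInfo_tensorId_le hΛ hρ)
    (heq ▸ mutualInfo_idTensor_le hΓ (posSemidef_tensorId hΛ.1 hρ))

lemma mutualInfo_tensorId_swapFactors_eq {Λ : Matrix α α ℂ →ₗ[ℂ] Matrix m m ℂ}
    {Γ : Matrix β β ℂ →ₗ[ℂ] Matrix n n ℂ} (hΛ : IsQuantumChannel Λ) (hΓ : IsQuantumChannel Γ)
    (hρ : ρ.PosSemidef) (heq : mutualInfo (idTensor Γ (tensorId Λ ρ)) = mutualInfo ρ) :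
    mutualInfo (tensorId Γ (swapFactors ρ)) = mutualInfo (swapFactors ρ) := by
  have hswap := posSemidef_swapFactors hρ
  refine mutualInfo_tensorId_eq hΓ hΛ hswap ?_
  have hcomm : idTensor Λ (tensorId Γ (swapFactors ρ)) =
      swapFactors (idTensor Γ (tensorId Λ ρ)) := by
    rw [idTensor_tensorId_comm Λ Γ ρ]
    rfl
  have hout : (idTensor Γ (tensorId Λ ρ)).PosSemidef :=
    posSemidef_swapFactors (posSemidef_tensorId hΓ.1
      (posSemidef_swapFactors (posSemidef_tensorId hΛ.1 hρ)))
  rw [hcomm, mutualInfo_swapFactors hout.isHermitian, heq, mutualInfo_swapFactors hρ.isHermitian]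

theorem classicalClassical_of_mutualInfo_marg_eq
    {Λ : Matrix α α ℂ →ₗ[ℂ] Matrix (α₁ × α₂) (α₁ × α₂) ℂ}
    {Γ : Matrix β β ℂ →ₗ[ℂ] Matrix (β₁ × β₂) (β₁ × β₂) ℂ}
    (hΛ : IsQuantumChannel Λ) (hΓ : IsQuantumChannel Γ) (hρ : IsDensityMatrix ρ)
    (h₁₁ : mutualInfo (marg11 (idTensor Γ (tensorId Λ ρ))) = mutualInfo ρ)
    (h₂₂ : mutualInfo (marg22 (idTensor Γ (tensorId Λ ρ))) = mutualInfo ρ) :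
    ClassicalClassical ρ := by
  obtain ⟨L, rfl, hL⟩ := exists_eq_krausMap_of_isQuantumChannel hΛ
  obtain ⟨G, rfl, hG⟩ := exists_eq_krausMap_of_isQuantumChannel hΓ
  rw [marg11_idTensor_tensorId] at h₁₁
  rw [marg22_idTensor_tensorId] at h₂₂
  have hL₁ := isQuantumChannel_krausMap ((sum_conjTranspose_krausFst_mul L).trans hL)
  have hL₂ := isQuantumChannel_krausMap ((sum_conjTranspose_krausSnd_mul L).trans hL)
  have hG₁ := isQuantumChannel_krausMap ((sum_conjTranspose_krausFst_mul G).trans hG)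
  have hG₂ := isQuantumChannel_krausMap ((sum_conjTranspose_krausSnd_mul G).trans hG)
  exact classicalClassical_of_commute_slice hρ
    (commute_slice_of_mutualInfo_eq hL hρ.1 (mutualInfo_tensorId_eq hL₁ hG₁ hρ.1 h₁₁)
      (mutualInfo_tensorId_eq hL₂ hG₂ hρ.1 h₂₂))
    (commute_slice_of_mutualInfo_eq hG (posSemidef_swapFactors hρ.1)
      (mutualInfo_tensorId_swapFactors_eq hL₁ hG₁ hρ.1 h₁₁)
      (mutualInfo_tensorId_swapFactors_eq hL₂ hG₂ hρ.1 h₂₂))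

end BroadcastingImpliesClassical

section Isometries
variable {m n α β : Type*} [Fintype m] [DecidableEq m] [Fintype n] [DecidableEq n]
  [Fintype α] [DecidableEq α] [Fintype β] [DecidableEq β]

/-- Conjugation `X ↦ U X Uᴴ`, as the map with the single Kraus operator `U`. -/
noncomputable def conjMap {m n : Type*} [Fintype m] (U : Matrix n m ℂ) :
    Matrix m m ℂ →ₗ[ℂ] Matrix n n ℂ :=
  krausMap fun _ : Unit => U

lemma conjMap_apply {m n : Type*} [Fintype m] (U : Matrix n m ℂ) (X : Matrix m m ℂ) :
    conjMap U X = U * X * Uᴴ := by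
  rw [conjMap, krausMap_apply, Fintype.sum_unique]

variable {U : Matrix n m ℂ}

lemma isQuantumChannel_conjMap {n : Type*} [Fintype n] {U : Matrix n m ℂ} (hU : Uᴴ * U = 1) :
    IsQuantumChannel (conjMap U) :=
  isQuantumChannel_krausMap (by rwa [Fintype.sum_unique])

lemma vnEntropy_conjMap (hU : Uᴴ * U = 1) {ρ : Matrix m m ℂ} (hρ : ρ.IsHermitian) :
    vnEntropy (conjMap U ρ) = vnEntropy ρ := by
  have hcharpoly := charpoly_mul_comm' (U * ρ) Uᴴ
  rw [← Matrix.mul_assoc, hU, Matrix.one_mul] at hcharpoly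
  have hroots := congrArg Polynomial.roots hcharpoly
  rw [Polynomial.roots_mul (mul_ne_zero (pow_ne_zero _ Polynomial.X_ne_zero)
      (charpoly_monic _).ne_zero), Polynomial.roots_mul (mul_ne_zero
      (pow_ne_zero _ Polynomial.X_ne_zero) (charpoly_monic _).ne_zero), Polynomial.roots_X_pow,
    Polynomial.roots_X_pow] at hroots
  have hsum := congrArg (fun s => (s.map fun z : ℂ => z.re * Real.logb 2 z.re).sum) hroots
  simp only [Multiset.map_add, Multiset.sum_add, Multiset.map_nsmul, Multiset.map_singleton,
    Multiset.sum_nsmul, Multiset.sum_singleton, Complex.zero_re, zero_mul, smul_zero, zero_add]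
    at hsum
  rw [conjMap_apply, vnEntropy_eq_sum_roots (isHermitian_mul_mul_conjTranspose U hρ),
    vnEntropy_eq_sum_roots hρ, hsum]

lemma mutualInfo_tensorId_conjMap (hU : Uᴴ * U = 1) {ρ : Matrix (m × β) (m × β) ℂ}
    (hρ : ρ.PosSemidef) : mutualInfo (tensorId (conjMap U) ρ) = mutualInfo ρ := by
  have hU' : (U ⊗ₖ (1 : Matrix β β ℂ))ᴴ * (U ⊗ₖ (1 : Matrix β β ℂ)) = 1 := by
    rw [conjTranspose_kronecker, ← mul_kronecker_mul, hU, conjTranspose_one, Matrix.one_mul,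
      one_kronecker_one]
  have htensor : tensorId (conjMap U) ρ = conjMap (U ⊗ₖ (1 : Matrix β β ℂ)) ρ :=
    LinearMap.congr_fun (tensorId_krausMap _) ρ
  rw [mutualInfo, ptraceRight_tensorId, ptraceLeft_tensorId (isQuantumChannel_conjMap hU).2,
    htensor, vnEntropy_conjMap hU (posSemidef_ptraceRight hρ).isHermitian,
    vnEntropy_conjMap hU' hρ.isHermitian, mutualInfo]

lemma mutualInfo_idTensor_conjMap (hU : Uᴴ * U = 1) {ρ : Matrix (α × m) (α × m) ℂ}
    (hρ : ρ.PosSemidef) : mutualInfo (idTensor (conjMap U) ρ) = mutualInfo ρ := by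
  have hswap := posSemidef_swapFactors hρ
  rw [idTensor_eq_swapFactors, mutualInfo_swapFactors
      (posSemidef_tensorId (isQuantumChannel_conjMap hU).1 hswap).isHermitian,
    mutualInfo_tensorId_conjMap hU hswap, mutualInfo_swapFactors hρ.isHermitian]

end Isometries

section MeasureAndPrepare
variable {ι m n α β : Type*}

/-- The operator `|x⟩⟨y|`. If `v` is an orthonormal basis, the operators `|u i⟩⟨v i|` are the Kraus
operators of measuring in `v` and preparing `u i` on outcome `i`. -/
def ketBra (x : n → ℂ) (y : m → ℂ) : Matrix n m ℂ := vecMulVec x (star y)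

lemma conjTranspose_ketBra (x : n → ℂ) (y : m → ℂ) : (ketBra x y)ᴴ = ketBra y x := by
  rw [ketBra, conjTranspose_vecMulVec, star_star, ketBra]

/-- The family `u` is orthonormal for the standard inner product of `m → ℂ`, in the form used by
`ClassicalClassical` since `m → ℂ` itself carries the sup norm. -/
def IsOrthonormalFamily [DecidableEq ι] [Fintype m] (u : ι → m → ℂ) : Prop :=
  ∀ i i', star (u i) ⬝ᵥ u i' = if i = i' then 1 else 0

lemma IsOrthonormalFamily.ketBra_mul_ketBra [DecidableEq ι] [Fintype m] {v : ι → m → ℂ}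
    (hv : IsOrthonormalFamily v) (x : n → ℂ) (y : α → ℂ) (i j : ι) :
    ketBra x (v i) * ketBra (v j) y = if i = j then ketBra x y else 0 := by
  rw [ketBra, ketBra, vecMulVec_mul_vecMulVec, hv]
  split_ifs
  · rw [one_smul, ketBra]
  · rw [zero_smul]
    ext a
    exact mul_zero (x a)

lemma IsOrthonormalFamily.sum_ketBra_self [Fintype m] [DecidableEq m] {v : m → m → ℂ}
    (hv : IsOrthonormalFamily v) : ∑ i, ketBra (v i) (v i) = 1 := by
  have hV : ((of v)ᵀ)ᴴ * (of v)ᵀ = 1 := Matrix.ext hv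
  rw [← mul_eq_one_comm.mp hV]
  ext a b
  rw [Matrix.sum_apply]
  rfl

lemma isOrthonormalFamily_single [DecidableEq ι] [Fintype m] [DecidableEq m] (e : ι ↪ m) :
    IsOrthonormalFamily fun i => Pi.single (e i) (1 : ℂ) := by
  intro i i'
  simp [Pi.single_apply, e.injective.eq_iff, eq_comm]

variable [Fintype m] [DecidableEq m] {v : m → m → ℂ} {u : m → n → ℂ}

lemma sum_conjTranspose_ketBra_mul [Fintype n] (hv : IsOrthonormalFamily v)
    (hu : IsOrthonormalFamily u) :
    ∑ i, (ketBra (u i) (v i))ᴴ * ketBra (u i) (v i) = 1 := by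
  simp only [conjTranspose_ketBra, hu.ketBra_mul_ketBra, if_true, hv.sum_ketBra_self]

lemma krausMap_ketBra (hv : IsOrthonormalFamily v) (u : m → n → ℂ) (j : m) :
    krausMap (fun i => ketBra (u i) (v i)) (ketBra (v j) (v j)) = ketBra (u j) (u j) := by
  rw [krausMap_apply, Finset.sum_eq_single_of_mem j (Finset.mem_univ j)]
  · simp only [conjTranspose_ketBra, hv.ketBra_mul_ketBra, if_true]
  · intro i _ hij
    rw [hv.ketBra_mul_ketBra, if_neg hij, Matrix.zero_mul]

lemma conjTranspose_sum_ketBra_mul [Fintype n] (hv : IsOrthonormalFamily v)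
    (hu : IsOrthonormalFamily u) :
    (∑ i, ketBra (u i) (v i))ᴴ * ∑ i, ketBra (u i) (v i) = 1 := by
  simp only [conjTranspose_sum, conjTranspose_ketBra, Matrix.sum_mul, Matrix.mul_sum,
    hu.ketBra_mul_ketBra, Finset.sum_ite_eq', Finset.mem_univ, if_true,
    hv.sum_ketBra_self]

lemma conjMap_sum_ketBra (hv : IsOrthonormalFamily v) (u : m → n → ℂ) (j : m) :
    conjMap (∑ i, ketBra (u i) (v i)) (ketBra (v j) (v j)) = ketBra (u j) (u j) := by
  simp only [conjMap_apply, conjTranspose_sum, conjTranspose_ketBra, Matrix.sum_mul,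
    hv.ketBra_mul_ketBra, Finset.sum_ite_eq', Finset.sum_ite_eq, Finset.mem_univ, if_true,
    Matrix.mul_sum]

end MeasureAndPrepare

section ClassicalImpliesBroadcasting
variable {m n m' n' α α₁ α₂ β β₁ β₂ : Type*}

/-- The product vector `x ⊗ y`. -/
def prodVec (x : α₁ → ℂ) (y : α₂ → ℂ) (p : α₁ × α₂) : ℂ := x p.1 * y p.2

lemma ketBra_prodVec (x : α₁ → ℂ) (y : α₂ → ℂ) :
    ketBra (prodVec x y) (prodVec x y) = ketBra x x ⊗ₖ ketBra y y := by
  ext p q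
  simp only [ketBra, vecMulVec_apply, prodVec, Pi.star_apply, star_mul', kroneckerMap_apply]
  ring

lemma IsOrthonormalFamily.prodVec {ι : Type*} [DecidableEq ι] [Fintype α₁] [Fintype α₂]
    {u : ι → α₁ → ℂ} {w : ι → α₂ → ℂ} (hu : IsOrthonormalFamily u) (hw : IsOrthonormalFamily w) :
    IsOrthonormalFamily fun i => prodVec (u i) (w i) := by
  intro i i'
  calc star (NoLocalBroadcasting.prodVec (u i) (w i)) ⬝ᵥ NoLocalBroadcasting.prodVec (u i') (w i')
      = (star (u i) ⬝ᵥ u i') * (star (w i) ⬝ᵥ w i') := by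
        simp only [dotProduct, Fintype.sum_prod_type, Finset.sum_mul_sum, Pi.star_apply,
          NoLocalBroadcasting.prodVec, star_mul']
        exact Finset.sum_congr rfl fun _ _ => Finset.sum_congr rfl fun _ _ => by ring
    _ = if i = i' then 1 else 0 := by
        rw [hu, hw]
        split_ifs <;> simp

lemma ptraceRight_kronecker [Fintype β] (X : Matrix α α ℂ) (Y : Matrix β β ℂ) :
    ptraceRight (X ⊗ₖ Y) = Y.trace • X := by
  ext i j
  simp only [ptraceRight, of_apply, kroneckerMap_apply, ← Finset.mul_sum, Matrix.smul_apply,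
    smul_eq_mul, mul_comm]
  rfl

lemma ptraceLeft_kronecker [Fintype α] (X : Matrix α α ℂ) (Y : Matrix β β ℂ) :
    ptraceLeft (X ⊗ₖ Y) = X.trace • Y := by
  rw [← ptraceRight_swapFactors, swapFactors_kronecker, ptraceRight_kronecker]

lemma IsOrthonormalFamily.trace_ketBra_self {ι : Type*} [DecidableEq ι] [Fintype α]
    {u : ι → α → ℂ} (hu : IsOrthonormalFamily u) (i : ι) : (ketBra (u i) (u i)).trace = 1 := by
  rw [ketBra, trace_vecMulVec, dotProduct_comm, hu, if_pos rfl]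

lemma exists_kraus_broadcasting [Fintype α] [DecidableEq α] [Fintype α₁] [Fintype α₂]
    {v : α → α → ℂ} (hv : IsOrthonormalFamily v)
    (e₁ : α ↪ α₁) (e₂ : α ↪ α₂) :
    ∃ L : α → Matrix (α₁ × α₂) α ℂ, ∑ i, (L i)ᴴ * L i = 1 ∧
      (∃ U : Matrix α₁ α ℂ, Uᴴ * U = 1 ∧ ∀ i,
        krausMap (krausFst L) (ketBra (v i) (v i)) = conjMap U (ketBra (v i) (v i))) ∧
      (∃ U : Matrix α₂ α ℂ, Uᴴ * U = 1 ∧ ∀ i,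
        krausMap (krausSnd L) (ketBra (v i) (v i)) = conjMap U (ketBra (v i) (v i))) := by
  classical
  have hu₁ := isOrthonormalFamily_single e₁
  have hu₂ := isOrthonormalFamily_single e₂
  refine ⟨fun i => ketBra (prodVec (Pi.single (e₁ i) 1) (Pi.single (e₂ i) 1)) (v i),
    sum_conjTranspose_ketBra_mul hv (hu₁.prodVec hu₂),
    ⟨_, conjTranspose_sum_ketBra_mul hv hu₁, fun i => ?_⟩,
    ⟨_, conjTranspose_sum_ketBra_mul hv hu₂, fun i => ?_⟩⟩
  · rw [krausMap_krausFst, krausMap_ketBra hv, ketBra_prodVec, ptraceRight_kronecker,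
      hu₂.trace_ketBra_self, one_smul, conjMap_sum_ketBra hv]
  · rw [krausMap_krausSnd, krausMap_ketBra hv, ketBra_prodVec, ptraceLeft_kronecker,
      hu₁.trace_ketBra_self, one_smul, conjMap_sum_ketBra hv]

lemma idTensor_tensorId_congr {ι κ : Type*} [Fintype ι] [Fintype κ]
    {Λ Λ' : Matrix α α ℂ →ₗ[ℂ] Matrix α₁ α₁ ℂ} {Γ Γ' : Matrix β β ℂ →ₗ[ℂ] Matrix β₁ β₁ ℂ}
    {X : ι → Matrix α α ℂ} {Y : κ → Matrix β β ℂ} (hΛ : ∀ i, Λ (X i) = Λ' (X i))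
    (hΓ : ∀ j, Γ (Y j) = Γ' (Y j)) (c : ι → κ → ℂ) :
    idTensor Γ (tensorId Λ (∑ i, ∑ j, c i j • (X i ⊗ₖ Y j))) =
      idTensor Γ' (tensorId Λ' (∑ i, ∑ j, c i j • (X i ⊗ₖ Y j))) := by
  simp only [map_sum, _root_.map_smul, tensorId_kronecker, idTensor_kronecker, hΛ, hΓ]

variable [Fintype α] [DecidableEq α] [Fintype α₁] [DecidableEq α₁] [Fintype α₂] [DecidableEq α₂]
  [Fintype β] [DecidableEq β] [Fintype β₁] [DecidableEq β₁] [Fintype β₂] [DecidableEq β₂]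

lemma mutualInfo_conjMap_conjMap {U : Matrix α₁ α ℂ} {W : Matrix β₁ β ℂ} (hU : Uᴴ * U = 1)
    (hW : Wᴴ * W = 1) {ρ : Matrix (α × β) (α × β) ℂ} (hρ : ρ.PosSemidef) :
    mutualInfo (idTensor (conjMap W) (tensorId (conjMap U) ρ)) = mutualInfo ρ := by
  rw [mutualInfo_idTensor_conjMap hW (posSemidef_tensorId (isQuantumChannel_conjMap hU).1 hρ),
    mutualInfo_tensorId_conjMap hU hρ]

theorem exists_isQuantumChannel_of_classicalClassical (e₁ : α ↪ α₁) (e₂ : α ↪ α₂) (f₁ : β ↪ β₁)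
    (f₂ : β ↪ β₂) {ρ : Matrix (α × β) (α × β) ℂ} (hρ : ρ.PosSemidef) (hcc : ClassicalClassical ρ) :
    ∃ (Λ : Matrix α α ℂ →ₗ[ℂ] Matrix (α₁ × α₂) (α₁ × α₂) ℂ)
      (Γ : Matrix β β ℂ →ₗ[ℂ] Matrix (β₁ × β₂) (β₁ × β₂) ℂ),
      IsQuantumChannel Λ ∧ IsQuantumChannel Γ ∧
      mutualInfo (marg11 (idTensor Γ (tensorId Λ ρ))) = mutualInfo ρ ∧
      mutualInfo (marg22 (idTensor Γ (tensorId Λ ρ))) = mutualInfo ρ := by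
  obtain ⟨p, v, w, -, -, hv, hw, hsum⟩ := hcc
  obtain ⟨L, hL, ⟨U₁, hU₁, hL₁⟩, U₂, hU₂, hL₂⟩ := exists_kraus_broadcasting hv e₁ e₂
  obtain ⟨G, hG, ⟨W₁, hW₁, hG₁⟩, W₂, hW₂, hG₂⟩ := exists_kraus_broadcasting hw f₁ f₂
  refine ⟨krausMap L, krausMap G, isQuantumChannel_krausMap hL, isQuantumChannel_krausMap hG,
    ?_, ?_⟩
  · rw [marg11_idTensor_tensorId, ← mutualInfo_conjMap_conjMap hU₁ hW₁ hρ, hsum]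
    exact congrArg mutualInfo (idTensor_tensorId_congr hL₁ hG₁ fun i j => (p i j : ℂ))
  · rw [marg22_idTensor_tensorId, ← mutualInfo_conjMap_conjMap hU₂ hW₂ hρ, hsum]
    exact congrArg mutualInfo (idTensor_tensorId_congr hL₂ hG₂ fun i j => (p i j : ℂ))

end ClassicalImpliesBroadcasting

end NoLocalBroadcasting

open NoLocalBroadcasting in
theorem no_local_broadcasting_mutualInfo_general {α α₁ α₂ β β₁ β₂ : Type*}
    [Fintype α] [DecidableEq α] [Fintype α₁] [DecidableEq α₁] [Fintype α₂] [DecidableEq α₂]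
    [Fintype β] [DecidableEq β] [Fintype β₁] [DecidableEq β₁] [Fintype β₂] [DecidableEq β₂]
    (hα₁ : Fintype.card α ≤ Fintype.card α₁) (hα₂ : Fintype.card α ≤ Fintype.card α₂)
    (hβ₁ : Fintype.card β ≤ Fintype.card β₁) (hβ₂ : Fintype.card β ≤ Fintype.card β₂)
    (ρ : Matrix (α × β) (α × β) ℂ) (hρ : IsDensityMatrix ρ) :
    (∃ (Λ : Matrix α α ℂ →ₗ[ℂ] Matrix (α₁ × α₂) (α₁ × α₂) ℂ)
        (Γ : Matrix β β ℂ →ₗ[ℂ] Matrix (β₁ × β₂) (β₁ × β₂) ℂ),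
        IsQuantumChannel Λ ∧ IsQuantumChannel Γ ∧
        mutualInfo (marg11 (idTensor Γ (tensorId Λ ρ))) = mutualInfo ρ ∧
        mutualInfo (marg22 (idTensor Γ (tensorId Λ ρ))) = mutualInfo ρ) ↔
      ClassicalClassical ρ := by
  constructor
  · rintro ⟨Λ, Γ, hΛ, hΓ, h₁₁, h₂₂⟩
    exact classicalClassical_of_mutualInfo_marg_eq hΛ hΓ hρ h₁₁ h₂₂
  · obtain ⟨e₁⟩ := Function.Embedding.nonempty_of_card_le hα₁
    obtain ⟨e₂⟩ := Function.Embedding.nonempty_of_card_le hα₂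
    obtain ⟨f₁⟩ := Function.Embedding.nonempty_of_card_le hβ₁
    obtain ⟨f₂⟩ := Function.Embedding.nonempty_of_card_le hβ₂
    exact exists_isQuantumChannel_of_classicalClassical e₁ e₂ f₁ f₂ hρ.1

/-- **No-local-broadcasting of mutual information.** There are local channels
`Λ : A → A₁A₂` and `Γ : B → B₁B₂` such that `ρ̃ = (Λ ⊗ Γ)[ρ_{AB}]` satisfies
`I(A₁:B₁) = I(A₂:B₂) = I(A:B)` if and only if `ρ_{AB}` is classical-classical. -/
theorem no_local_broadcasting_mutualInfo {α β : Type*} [Fintype α] [DecidableEq α]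
    [Fintype β] [DecidableEq β]
    (ρ : Matrix (α × β) (α × β) ℂ) (hρ : IsDensityMatrix ρ) :
    (∃ (Λ : Matrix α α ℂ →ₗ[ℂ] Matrix (α × α) (α × α) ℂ)
        (Γ : Matrix β β ℂ →ₗ[ℂ] Matrix (β × β) (β × β) ℂ),
        IsQuantumChannel Λ ∧ IsQuantumChannel Γ ∧
        mutualInfo (marg11 (idTensor Γ (tensorId Λ ρ))) = mutualInfo ρ ∧
        mutualInfo (marg22 (idTensor Γ (tensorId Λ ρ))) = mutualInfo ρ) ↔
      ClassicalClassical ρ :=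
  no_local_broadcasting_mutualInfo_general le_rfl le_rfl le_rfl le_rfl ρ hρ
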